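/- Let M be a properly infinite von Neumann algebra and p a finite projection in M. Then the QOT-closure of {[p]} in P(M)/∼ equals {[q] : q ≼ p}. -/

import Mathlib

open ContinuousLinearMap Filter Topology

universe u

noncomputable section

variable {H : Type u} [NormedAddCommGroup H] [InnerProductSpace ℂ H] [CompleteSpace H]

/-- `p` is an (orthogonal) projection belonging to the von Neumann algebra `M`. -/
def IsProjIn (M : VonNeumannAlgebra H) (p : H →L[ℂ] H) : Prop :=
  p ∈ M ∧ IsSelfAdjoint p ∧ p * p = p

/-- Murray–von Neumann equivalence of `p` and `q` relative to `M`: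
there is a partial isometry `v ∈ M` with `v* v = p` and `v v* = q`. -/
def MvNEquiv (M : VonNeumannAlgebra H) (p q : H →L[ℂ] H) : Prop :=
  ∃ v ∈ M, adjoint v * v = p ∧ v * adjoint v = q

/-- The order on projections: `p ≤ q` iff `p q = p = q p`. -/
def ProjLE (p q : H →L[ℂ] H) : Prop := p * q = p ∧ q * p = p

/-- Murray–von Neumann subequivalence `p ≼ q`: `p` is equivalent to a subprojection of `q`. -/
def SubEquiv (M : VonNeumannAlgebra H) (p q : H →L[ℂ] H) : Prop :=
  ∃ r, IsProjIn M r ∧ MvNEquiv M p r ∧ ProjLE r q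

/-- `z` is a central projection of `M`. -/
def IsCentralProj (M : VonNeumannAlgebra H) (z : H →L[ℂ] H) : Prop :=
  IsProjIn M z ∧ ∀ x ∈ M, z * x = x * z

/-- A projection `p` is finite: `p ∼ q ≤ p` implies `q = p`. -/
def FiniteProj (M : VonNeumannAlgebra H) (p : H →L[ℂ] H) : Prop :=
  ∀ q, IsProjIn M q → ProjLE q p → MvNEquiv M p q → q = p

/-- A projection `p` is properly infinite: it is a countably infinite sum of pairwise
orthogonal projections, each equivalent to `p`. -/
def ProperlyInfiniteProj (M : VonNeumannAlgebra H) (p : H →L[ℂ] H) : Prop :=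
  p ≠ 0 ∧ ∃ e : ℕ → H →L[ℂ] H, (∀ n, IsProjIn M (e n)) ∧
    (Pairwise fun m n => e m * e n = 0) ∧ (∀ n, MvNEquiv M (e n) p) ∧
    ∀ ξ : H, HasSum (fun n => e n ξ) (p ξ)

/-- `z` is the central support of `h`: the smallest central projection with `z h = h`. -/
def IsCentralSupport (M : VonNeumannAlgebra H) (h z : H →L[ℂ] H) : Prop :=
  IsCentralProj M z ∧ z * h = h ∧ ∀ w, IsCentralProj M w → w * h = h → z * w = z

/-- The projection `e` is σ-finite relative to `M`: every family of pairwise orthogonal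
nonzero subprojections of `e` in `M` is countable. -/
def SigmaFiniteProj (M : VonNeumannAlgebra H) (e : H →L[ℂ] H) : Prop :=
  ∀ S : Set (H →L[ℂ] H), (∀ q ∈ S, IsProjIn M q ∧ q ≠ 0 ∧ ProjLE q e) →
    (S.Pairwise fun a b => a * b = 0) → S.Countable

/-- Kadison–Pedersen equivalence on the positive cone: `h ≈ k` iff there is a family
`{x_α} ⊆ M` with `h = Σ x_α* x_α` and `k = Σ x_α x_α*` (sums in the strong topology). -/
def KPEquiv (M : VonNeumannAlgebra H) (h k : H →L[ℂ] H) : Prop :=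
  ∃ (ι : Type u) (x : ι → H →L[ℂ] H), (∀ i, x i ∈ M) ∧
    (∀ ξ : H, HasSum (fun i => (adjoint (x i) * x i) ξ) (h ξ)) ∧
    (∀ ξ : H, HasSum (fun i => (x i * adjoint (x i)) ξ) (k ξ))

/-- Operator order: `a ≤ b` iff `b - a` is positive. -/
def OpLE (a b : H →L[ℂ] H) : Prop := (b - a).IsPositive

/-- `h ∈ M₊` is finite in the Kadison–Pedersen sense: `h ≈ k ≤ h` implies `k = h`. -/
def KPFinite (M : VonNeumannAlgebra H) (h : H →L[ℂ] H) : Prop :=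
  ∀ k, k ∈ M → k.IsPositive → OpLE k h → KPEquiv M h k → k = h

/-- `h ∈ M₊` is properly infinite: `z h` is finite and nonzero for no central projection `z`. -/
def KPProperlyInfinite (M : VonNeumannAlgebra H) (h : H →L[ℂ] H) : Prop :=
  h ≠ 0 ∧ ∀ z, IsCentralProj M z → KPFinite M (z * h) → z * h = 0

/-- The set of projections of `M`. -/
def ProjSet (M : VonNeumannAlgebra H) := {p : H →L[ℂ] H // IsProjIn M p}

/-- The strong operator topology on the projections of `M` (topology of pointwise convergence). -/
instance (M : VonNeumannAlgebra H) : TopologicalSpace (ProjSet M) :=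
  TopologicalSpace.induced (fun p : ProjSet M => (fun ξ => p.1 ξ : H → H)) inferInstance

/-- The quotient `P(M)/∼` of the projections of `M` by Murray–von Neumann equivalence,
carrying the quotient (strong operator) topology. -/
abbrev PQuot (M : VonNeumannAlgebra H) :=
  Quot (fun p q : ProjSet M => MvNEquiv M p.1 q.1)

/-- The quotient map `P(M) → P(M)/∼`. -/
def pquotMk (M : VonNeumannAlgebra H) : ProjSet M → PQuot M := Quot.mk _

/-- The strong operator topology on `B(H)`. -/
def SOT : TopologicalSpace (H →L[ℂ] H) :=
  TopologicalSpace.induced (fun a : H →L[ℂ] H => (fun ξ => a ξ : H → H)) inferInstance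

/-- The order induced on `P(M)/∼` by Murray–von Neumann subequivalence. -/
def QLE (M : VonNeumannAlgebra H) (a b : PQuot M) : Prop :=
  ∃ p q : ProjSet M, a = pquotMk M p ∧ b = pquotMk M q ∧ SubEquiv M p.1 q.1

/-!
Since `P(M) → P(M)/∼` is a quotient map, the closure is computed from two facts about `P(M)`.

*The set `{q | q ≼ p}` is strongly closed.* Let `Q i → q` strongly with `Q i = X i* X i` and
`p X i = X i`. Comparison of `q` with `p` gives a partial isometry `v` from `q` to `p` and a central
projection `z` such that `z` fixes the leftover `e = q - v* v` and `z p = z v v*`. If `e ≠ 0`, then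
some `X i` carries a nonzero piece of `e` into `p`; cut down to a suitable central summand `d ≤ z`,
it provides `y ≠ 0` with `y* y ≤ e`. Put `x = d v`. Compressed to `r = x* x + y* y ≤ q`, the
contractions `x* X i` satisfy `‖x* X i r η‖ = ‖Q i r η‖ → ‖r η‖`, yet their ranges are orthogonal to
`y* y`. Cancellation in the finite projection `r` turns their defects into copies of `y* y` inside
`r` whose adjoints tend strongly to `0`. No such copies exist: `y y*` can be chosen below a
projection carrying a vector state that is tracial up to a factor `2`, with `r` in the algebraic
ideal generated by that projection. The quasi-trace moves strong convergence from adjoints to the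
operators themselves, and it replaces the centre-valued trace of `p M p`.

*Every `r ≤ p` is a strong limit of copies of `p`, up to equivalence.* As `1` is properly infinite,
there are isometries `J n ∈ M` with orthogonal ranges and `J n* → 0` strongly. The projections
`J 0 r J 0* + J n (p - r) J n*` are equivalent to `p` and converge to `J 0 r J 0* ∼ r`.
-/

section PartialIsometry

theorem mul_mul_of_mul_eq {R : Type*} [Semigroup R] {a b c : R} (h : a * b = c) (x : R) :
    a * (b * x) = c * x := by
  rw [← mul_assoc, h]

section StarMul

variable {R : Type*} [Semigroup R] [StarMul R] {p v x : R}

theorem star_mul_of_mul_eq (hp : IsSelfAdjoint p) (h : p * x = x) : star x * p = star x := by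
  simpa [hp.star_eq] using congr(star $h)

theorem mul_star_of_mul_eq (hp : IsSelfAdjoint p) (h : x * p = x) : p * star x = star x := by
  simpa [hp.star_eq] using congr(star $h)

/-- Partial isometries of a star semigroup. -/
def IsPartialIsometry (v : R) : Prop := v * star v * v = v

theorem IsPartialIsometry.mul_star_mul_self (hv : IsPartialIsometry v) :
    v * (star v * v) = v := by
  rw [← mul_assoc]; exact hv

theorem IsPartialIsometry.star (hv : IsPartialIsometry v) : IsPartialIsometry (star v) := by
  simpa [IsPartialIsometry, mul_assoc] using congr(Star.star $(hv.mul_star_mul_self))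

theorem IsPartialIsometry.isStarProjection_star_mul_self (hv : IsPartialIsometry v) :
    IsStarProjection (Star.star v * v) :=
  ⟨by rw [IsIdempotentElem, mul_assoc, hv.mul_star_mul_self], .star_mul_self v⟩

theorem IsPartialIsometry.isStarProjection_mul_star_self (hv : IsPartialIsometry v) :
    IsStarProjection (v * Star.star v) := by
  simpa using hv.star.isStarProjection_star_mul_self

end StarMul

section Ring

variable {R : Type*} [NonUnitalRing R] [StarRing R] {e u v : R}

theorem isPartialIsometry_zero : IsPartialIsometry (0 : R) := by
  simp [IsPartialIsometry]

theorem IsPartialIsometry.mul_sub_star_mul_self (hv : IsPartialIsometry v) (hve : v * e = v) :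
    v * (e - Star.star v * v) = 0 := by
  rw [mul_sub, hve, hv.mul_star_mul_self, sub_self]

theorem IsPartialIsometry.star_mul_sub_mul_star_self (hv : IsPartialIsometry v)
    (he : IsSelfAdjoint e) (hev : e * v = v) : Star.star v * (e - v * Star.star v) = 0 := by
  simpa using hv.star.mul_sub_star_mul_self (star_mul_of_mul_eq he hev)

theorem IsPartialIsometry.isStarProjection_sub_star_mul_self (hv : IsPartialIsometry v)
    (he : IsStarProjection e) (hve : v * e = v) : IsStarProjection (e - Star.star v * v) :=
  hv.isStarProjection_star_mul_self.sub_of_mul_eq_left he (by rw [mul_assoc, hve])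

theorem IsPartialIsometry.isStarProjection_sub_mul_star_self (hv : IsPartialIsometry v)
    (he : IsStarProjection e) (hev : e * v = v) : IsStarProjection (e - v * Star.star v) := by
  simpa using hv.star.isStarProjection_sub_star_mul_self he
    (star_mul_of_mul_eq he.isSelfAdjoint hev)

theorem star_add_mul_add_of_orthogonal (h : star v * u = 0) :
    star (v + u) * (v + u) = star v * v + star u * u := by
  have h' : star u * v = 0 := by simpa using congr(star $h)
  simp only [star_add, mul_add, add_mul, h, h', add_zero, zero_add]

theorem add_mul_star_add_of_orthogonal (h : v * star u = 0) :
    (v + u) * star (v + u) = v * star v + u * star u := by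
  simpa using star_add_mul_add_of_orthogonal (v := star v) (u := star u) (by rwa [star_star])

theorem IsPartialIsometry.add (hv : IsPartialIsometry v) (hu : IsPartialIsometry u)
    (h : Star.star v * u = 0) (h' : v * Star.star u = 0) : IsPartialIsometry (v + u) := by
  have huv : u * Star.star v = 0 := by simpa using congr(Star.star $h')
  rw [IsPartialIsometry, mul_assoc, star_add_mul_add_of_orthogonal h]
  simp only [mul_add, add_mul, hv.mul_star_mul_self, hu.mul_star_mul_self,
    mul_mul_of_mul_eq huv, mul_mul_of_mul_eq h', zero_mul, add_zero, zero_add]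

end Ring

section CStarRing

variable {R : Type*} [NonUnitalNormedRing R] [StarRing R] [CStarRing R] {e v : R}

theorem mul_eq_self_of_star_mul_self (h : star v * v = e) (he : IsIdempotentElem e) :
    v * e = v := by
  have hes : star e = e := by simp [← h]
  rw [← sub_eq_zero, ← CStarRing.star_mul_self_eq_zero_iff]
  simp only [star_sub, star_mul, hes, mul_sub, sub_mul, mul_assoc, mul_mul_of_mul_eq h, h, he.eq,
    sub_self]

theorem isPartialIsometry_of_star_mul_self (h : star v * v = e) (he : IsIdempotentElem e) :
    IsPartialIsometry v := by
  rw [IsPartialIsometry, mul_assoc, h, mul_eq_self_of_star_mul_self h he]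

end CStarRing

end PartialIsometry

section OperatorNorm

variable {e u v x y : H →L[ℂ] H}

theorem norm_apply_sq_eq_re_inner (x : H →L[ℂ] H) (ξ : H) :
    ‖x ξ‖ ^ 2 = RCLike.re (inner ℂ ((star x * x) ξ) ξ) :=
  x.apply_norm_sq_eq_inner_adjoint_left ξ

theorem norm_apply_sq_add (h : star x * x + star y * y = star v * v) (ξ : H) :
    ‖x ξ‖ ^ 2 + ‖y ξ‖ ^ 2 = ‖v ξ‖ ^ 2 := by
  simp only [norm_apply_sq_eq_re_inner, ← h, add_apply, inner_add_left, map_add]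

theorem norm_apply_le_of_isStarProjection (he : IsStarProjection e) (ξ : H) : ‖e ξ‖ ≤ ‖ξ‖ := by
  simpa using e.le_of_opNorm_le he.norm_le ξ

theorem norm_apply_eq_of_star_mul_self_eq (h : star x * x = star y * y) (ξ : H) :
    ‖x ξ‖ = ‖y ξ‖ := by
  rw [← sq_eq_sq₀ (norm_nonneg _) (norm_nonneg _), norm_apply_sq_eq_re_inner, h,
    ← norm_apply_sq_eq_re_inner]

theorem norm_apply_eq_of_star_mul_self (h : star v * v = e) (he : IsStarProjection e) (ξ : H) :
    ‖v ξ‖ = ‖e ξ‖ :=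
  norm_apply_eq_of_star_mul_self_eq (by rw [h, he.isSelfAdjoint.star_eq, he.isIdempotentElem]) ξ

theorem IsPartialIsometry.norm_apply_le (hv : IsPartialIsometry v) (ξ : H) : ‖v ξ‖ ≤ ‖ξ‖ := by
  rw [norm_apply_eq_of_star_mul_self rfl hv.isStarProjection_star_mul_self]
  exact norm_apply_le_of_isStarProjection hv.isStarProjection_star_mul_self ξ

theorem IsPartialIsometry.norm_le_one (hv : IsPartialIsometry v) : ‖v‖ ≤ 1 :=
  v.opNorm_le_bound zero_le_one fun ξ => by simpa using hv.norm_apply_le ξ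

theorem norm_apply_sq_sub_of_isStarProjection (he : IsStarProjection e) (ξ : H) :
    ‖ξ - e ξ‖ ^ 2 = ‖ξ‖ ^ 2 - ‖e ξ‖ ^ 2 := by
  have h := norm_apply_sq_add (x := e) (y := 1 - e) (v := 1) (by
    rw [he.isSelfAdjoint.star_eq, he.one_sub.isSelfAdjoint.star_eq, he.isIdempotentElem,
      he.one_sub.isIdempotentElem]
    simp) ξ
  exact eq_sub_of_add_eq' h

theorem norm_add_apply_sq_of_orthogonal (h : star v * u = 0) (ξ : H) :
    ‖(v + u) ξ‖ ^ 2 = ‖v ξ‖ ^ 2 + ‖u ξ‖ ^ 2 :=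
  (norm_apply_sq_add (star_add_mul_add_of_orthogonal h).symm ξ).symm

end OperatorNorm

section Membership

variable {M : VonNeumannAlgebra H} {p v x : H →L[ℂ] H}

theorem IsProjIn.isStarProjection (hp : IsProjIn M p) : IsStarProjection p :=
  ⟨hp.2.2, hp.2.1⟩

theorem IsProjIn.star_eq (hp : IsProjIn M p) : star p = p := hp.2.1

theorem isProjIn_iff : IsProjIn M p ↔ p ∈ M ∧ IsStarProjection p :=
  ⟨fun hp => ⟨hp.1, hp.isStarProjection⟩,
    fun hp => ⟨hp.1, hp.2.isSelfAdjoint, hp.2.isIdempotentElem⟩⟩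

theorem IsPartialIsometry.isProjIn_star_mul_self (hv : IsPartialIsometry v) (hM : v ∈ M) :
    IsProjIn M (Star.star v * v) :=
  isProjIn_iff.2 ⟨mul_mem (star_mem hM) hM, hv.isStarProjection_star_mul_self⟩

theorem IsPartialIsometry.isProjIn_mul_star_self (hv : IsPartialIsometry v) (hM : v ∈ M) :
    IsProjIn M (v * Star.star v) :=
  isProjIn_iff.2 ⟨mul_mem hM (star_mem hM), hv.isStarProjection_mul_star_self⟩

theorem IsPartialIsometry.isProjIn_sub_star_mul_self (hv : IsPartialIsometry v) (hM : v ∈ M)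
    (hp : IsProjIn M p) (hvp : v * p = v) : IsProjIn M (p - Star.star v * v) :=
  isProjIn_iff.2 ⟨sub_mem hp.1 (hv.isProjIn_star_mul_self hM).1,
    hv.isStarProjection_sub_star_mul_self hp.isStarProjection hvp⟩

theorem IsPartialIsometry.isProjIn_sub_mul_star_self (hv : IsPartialIsometry v) (hM : v ∈ M)
    (hp : IsProjIn M p) (hpv : p * v = v) : IsProjIn M (p - v * Star.star v) :=
  isProjIn_iff.2 ⟨sub_mem hp.1 (hv.isProjIn_mul_star_self hM).1,
    hv.isStarProjection_sub_mul_star_self hp.isStarProjection hpv⟩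

theorem mem_of_commute_commutant (h : ∀ y ∈ M.commutant, y * x = x * y) : x ∈ M := by
  rw [← VonNeumannAlgebra.commutant_commutant M, VonNeumannAlgebra.mem_commutant_iff]
  exact h

theorem commute_of_mem_commutant {y : H →L[ℂ] H} (hy : y ∈ M.commutant) (hx : x ∈ M) :
    Commute x y :=
  VonNeumannAlgebra.mem_commutant_iff.1 hy x hx

theorem cfc_real_mem {h : H →L[ℂ] H} (hh : h ∈ M) (f : ℝ → ℝ) : cfc f h ∈ M :=
  mem_of_commute_commutant fun _ hy => ((commute_of_mem_commutant hy hh).cfc_real f).eq.symm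

theorem mem_of_tendsto_apply {ι : Type*} {l : Filter ι} [l.NeBot] {v : ι → H →L[ℂ] H}
    (hv : ∀ᶠ i in l, v i ∈ M) (hx : ∀ ξ, Tendsto (fun i => v i ξ) l (𝓝 (x ξ))) : x ∈ M := by
  refine mem_of_commute_commutant fun y hy => ContinuousLinearMap.ext fun ξ => ?_
  refine tendsto_nhds_unique ((y.continuous.tendsto _).comp (hx ξ)) ((hx (y ξ)).congr' ?_)
  filter_upwards [hv] with i hi
  exact congr($((commute_of_mem_commutant hy hi).eq) ξ)

end Membership

section ClosedSpan

variable {M : VonNeumannAlgebra H} {S : Set H} {x y : H →L[ℂ] H} {η : H}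

/-- The orthogonal projection onto the closed linear span of `S`. -/
def closedSpanProj (S : Set H) : H →L[ℂ] H :=
  (Submodule.span ℂ S).topologicalClosure.starProjection

theorem isStarProjection_closedSpanProj (S : Set H) : IsStarProjection (closedSpanProj S) :=
  isStarProjection_starProjection

theorem closedSpanProj_apply_of_mem (hη : η ∈ S) : closedSpanProj S η = η :=
  Submodule.starProjection_eq_self_iff.2 <|
    Submodule.le_topologicalClosure _ (Submodule.subset_span hη)

theorem mul_closedSpanProj_congr (h : ∀ η ∈ S, x η = y η) :
    x * closedSpanProj S = y * closedSpanProj S := by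
  have hker : (Submodule.span ℂ S).topologicalClosure ≤
      LinearMap.ker ((x - y : H →L[ℂ] H) : H →ₗ[ℂ] H) :=
    Submodule.topologicalClosure_minimal _
      (Submodule.span_le.2 fun η hη => by simp [h η hη]) (x - y).isClosed_ker
  ext ξ
  have hξ := hker (Submodule.starProjection_apply_mem _ ξ)
  simpa [closedSpanProj, sub_eq_zero] using hξ

theorem mul_closedSpanProj_eq_zero (h : ∀ η ∈ S, x η = 0) : x * closedSpanProj S = 0 := by
  simpa using mul_closedSpanProj_congr (y := 0) h

theorem mul_closedSpanProj_eq_self (h : ∀ η ∈ S, x η = η) :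
    x * closedSpanProj S = closedSpanProj S := by
  simpa using mul_closedSpanProj_congr (y := 1) h

theorem isProjIn_closedSpanProj (hS : ∀ y ∈ M.commutant, ∀ η ∈ S, y η ∈ S) :
    IsProjIn M (closedSpanProj S) := by
  refine isProjIn_iff.2 ⟨?_, isStarProjection_closedSpanProj S⟩
  rw [VonNeumannAlgebra.IsStarProjection.mem_iff (isStarProjection_closedSpanProj S)]
  intro y hy
  rw [closedSpanProj, Submodule.range_starProjection, Module.End.mem_invtSubmodule]
  refine Submodule.topologicalClosure_minimal _ (Submodule.span_le.2 fun η hη => ?_)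
    ((Submodule.isClosed_topologicalClosure _).preimage y.continuous)
  exact Submodule.le_topologicalClosure _ (Submodule.subset_span (hS y hy η hη))

end ClosedSpan

section SpectralCut

variable {A : Type*} [CStarAlgebra A] {δ : ℝ} {h : A}

/-- The positive part `(h - δ)₊` of a self-adjoint element `h`; the range of this operator is the
spectral subspace of `h` for the half-line `(δ, ∞)`. -/
def cutExcess (δ : ℝ) (h : A) : A := cfc (fun t : ℝ => max (t - δ) 0) h

/-- The inverse square root of `max h δ`; it inverts `√h` on the spectral subspace of `h`
for `(δ, ∞)`. -/
def cutInvSqrt (δ : ℝ) (h : A) : A := cfc (fun t : ℝ => (√(max t δ))⁻¹) h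

theorem isSelfAdjoint_cutExcess (δ : ℝ) (h : A) : IsSelfAdjoint (cutExcess δ h) :=
  cfc_predicate _ h

theorem isSelfAdjoint_cutInvSqrt (δ : ℝ) (h : A) : IsSelfAdjoint (cutInvSqrt δ h) :=
  cfc_predicate _ h

theorem commute_cutExcess (δ : ℝ) (h : A) : Commute h (cutExcess δ h) :=
  ((Commute.refl h).cfc_real _).symm

theorem continuous_inv_sqrt_max (hδ : 0 < δ) : Continuous fun t : ℝ => (√(max t δ))⁻¹ :=
  Continuous.inv₀ (by fun_prop) fun _ => (Real.sqrt_pos.2 (lt_max_of_lt_right hδ)).ne'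

theorem exists_mul_eq_cutExcess (hh : IsSelfAdjoint h) (hδ : 0 < δ) :
    ∃ m, cutExcess δ h = m * h := by
  have hcont : Continuous fun t : ℝ => max (t - δ) 0 / max t δ :=
    .div (by fun_prop) (by fun_prop) fun _ => (lt_max_of_lt_right hδ).ne'
  refine ⟨cfc (fun t : ℝ => max (t - δ) 0 / max t δ) h, ?_⟩
  rw [cutExcess]
  nth_rewrite 3 [← cfc_id ℝ h]
  rw [← cfc_mul _ _ h hcont.continuousOn (by fun_prop)]
  congr 1
  ext t
  rcases le_total t δ with ht | ht
  · simp [ht]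
  · simp [ht, div_mul_cancel₀ _ (hδ.trans_le ht).ne']

theorem cutInvSqrt_mul_mul_cutExcess (hh : IsSelfAdjoint h) (hδ : 0 < δ) :
    cutInvSqrt δ h * h * cutInvSqrt δ h * cutExcess δ h = cutExcess δ h := by
  have hcont := continuous_inv_sqrt_max hδ
  rw [cutInvSqrt, cutExcess]
  nth_rewrite 2 [← cfc_id ℝ h]
  rw [← cfc_mul _ _ h hcont.continuousOn (by fun_prop),
    ← cfc_mul _ _ h (by fun_prop) hcont.continuousOn,
    ← cfc_mul _ _ h (by fun_prop) (by fun_prop)]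
  congr 1
  ext t
  rcases le_total t δ with ht | ht
  · simp [ht]
  · have hsqrt : √t * √t = t := Real.mul_self_sqrt (hδ.le.trans ht)
    have hne : √t ≠ 0 := (Real.sqrt_pos.2 (hδ.trans_le ht)).ne'
    have hone : (√t)⁻¹ * t * (√t)⁻¹ = 1 := by
      nth_rewrite 2 [← hsqrt]
      field_simp
    simp [ht, hone]

theorem norm_cutInvSqrt_sq_mul_le (h : A) (hδ : 0 < δ) : ‖cutInvSqrt δ h‖ ^ 2 * δ ≤ 1 := by
  have hnorm : ‖cutInvSqrt δ h‖ ≤ (√δ)⁻¹ := by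
    refine norm_cfc_le (by positivity) fun t _ => ?_
    rw [Real.norm_of_nonneg (by positivity)]
    gcongr
    exact le_max_right _ _
  calc ‖cutInvSqrt δ h‖ ^ 2 * δ ≤ (√δ)⁻¹ ^ 2 * δ := by gcongr
    _ = 1 := by rw [inv_pow, Real.sq_sqrt hδ.le, inv_mul_cancel₀ hδ.ne']

theorem le_algebraMap_add_cutExcess [PartialOrder A] [StarOrderedRing A] (hh : IsSelfAdjoint h)
    (δ : ℝ) : h ≤ algebraMap ℝ A δ + cutExcess δ h := by
  rw [cutExcess, ← cfc_const_add δ (fun t : ℝ => max (t - δ) 0) h (by fun_prop)]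
  nth_rewrite 1 [← cfc_id ℝ h]
  refine cfc_mono (fun t _ => ?_) continuousOn_id (by fun_prop)
  rw [id]
  linarith [le_max_left (t - δ) 0]

end SpectralCut

section ApproximatePolarDecomposition

variable {M : VonNeumannAlgebra H} {x h u : H →L[ℂ] H} {δ : ℝ}

/-- The spectral projection of a self-adjoint operator `h` for `(δ, ∞)`. -/
def spectralCut (δ : ℝ) (h : H →L[ℂ] H) : H →L[ℂ] H :=
  closedSpanProj (Set.range ⇑(cutExcess δ h : H →L[ℂ] H))

theorem isStarProjection_spectralCut (δ : ℝ) (h : H →L[ℂ] H) :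
    IsStarProjection (spectralCut δ h) :=
  isStarProjection_closedSpanProj _

theorem isProjIn_spectralCut (hh : h ∈ M) (δ : ℝ) : IsProjIn M (spectralCut δ h) := by
  refine isProjIn_closedSpanProj ?_
  rintro y hy _ ⟨η, rfl⟩
  exact ⟨y η, congr($((commute_of_mem_commutant hy (cfc_real_mem hh _)).eq) η)⟩

theorem mul_spectralCut_congr {x y : H →L[ℂ] H} (hxy : x * cutExcess δ h = y * cutExcess δ h) :
    x * spectralCut δ h = y * spectralCut δ h :=
  mul_closedSpanProj_congr <| by rintro _ ⟨η, rfl⟩; exact congr($hxy η)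

theorem spectralCut_mul_cutExcess (δ : ℝ) (h : H →L[ℂ] H) :
    spectralCut δ h * cutExcess δ h = cutExcess δ h :=
  ContinuousLinearMap.ext fun η => closedSpanProj_apply_of_mem ⟨η, rfl⟩

theorem commute_spectralCut (hh : IsSelfAdjoint h) (δ : ℝ) : Commute h (spectralCut δ h) := by
  set s := spectralCut δ h
  have hs : star s = s := (isStarProjection_spectralCut δ h).isSelfAdjoint
  have hsym : s * h * s = h * s := mul_spectralCut_congr <| by
    rw [mul_assoc, (commute_cutExcess δ h).eq, ← mul_assoc, spectralCut_mul_cutExcess]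
  have hstar := congr(star $hsym)
  simp only [star_mul, hs, hh.star_eq] at hstar
  rw [Commute, SemiconjBy, ← hstar, ← mul_assoc, hsym]

theorem spectralCut_mul_eq_self (hh : IsSelfAdjoint h) (hδ : 0 < δ) {r : H →L[ℂ] H}
    (hr : h * r = h) : spectralCut δ h * r = spectralCut δ h := by
  obtain ⟨m, hm⟩ := exists_mul_eq_cutExcess hh hδ
  have hk : cutExcess δ h * r = cutExcess δ h := by rw [hm, mul_assoc, hr]
  have hrs : star r * spectralCut δ h = 1 * spectralCut δ h := mul_spectralCut_congr <| by
    simpa [(isSelfAdjoint_cutExcess δ h).star_eq] using congr(star $hk)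
  simpa [(isStarProjection_spectralCut δ h).isSelfAdjoint.star_eq] using congr(star $hrs)

theorem re_inner_le_of_spectralCut_apply_eq_zero (hh : IsSelfAdjoint h) {η : H}
    (hη : spectralCut δ h η = 0) : RCLike.re (inner ℂ (h η) η) ≤ δ * ‖η‖ ^ 2 := by
  have hks : cutExcess δ h * spectralCut δ h = cutExcess δ h := by
    simpa [(isSelfAdjoint_cutExcess δ h).star_eq] using
      star_mul_of_mul_eq (isStarProjection_spectralCut δ h).isSelfAdjoint
        (spectralCut_mul_cutExcess δ h)
  have hk : cutExcess δ h η = 0 := by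
    rw [← hks, mul_apply_eq_comp, hη, map_zero]
  have hle := ((ContinuousLinearMap.le_def _ _).1
    (le_algebraMap_add_cutExcess hh δ)).re_inner_nonneg_left η
  have hδη : (algebraMap ℝ (H →L[ℂ] H) δ) η = (δ : ℂ) • η := by
    simp [Algebra.algebraMap_eq_smul_one]
  simp only [sub_apply, add_apply, hk, add_zero, inner_sub_left, map_sub, hδη, inner_smul_left,
    inner_self_eq_norm_sq_to_K] at hle
  simpa [← Complex.ofReal_pow] using hle

/-- A partial isometry `u = x c` of `M` that plays the role of the polar part of `x ∈ M`: its
initial projection `u* u` is the spectral projection of `x* x` for `(δ, ∞)`. -/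
structure IsApproxPolarPart (M : VonNeumannAlgebra H) (δ : ℝ) (x u : H →L[ℂ] H) : Prop where
  mem : u ∈ M
  isPartialIsometry : IsPartialIsometry u
  exists_eq_mul : ∃ c ∈ M, u = x * c
  mul_eq_self : ∀ r, x * r = x → u * r = u
  norm_star_apply_sq_le : ∀ ξ, δ * ‖star u ξ‖ ^ 2 ≤ ‖star x ξ‖ ^ 2
  norm_apply_sq_le : ∀ ξ,
    ‖x ξ‖ ^ 2 ≤ ‖x ((star u * u) ξ)‖ ^ 2 + δ * ‖ξ - (star u * u) ξ‖ ^ 2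

theorem norm_apply_sq_le_spectralCut (x : H →L[ℂ] H) (δ : ℝ) (ξ : H) :
    ‖x ξ‖ ^ 2 ≤ ‖x (spectralCut δ (star x * x) ξ)‖ ^ 2 +
      δ * ‖ξ - spectralCut δ (star x * x) ξ‖ ^ 2 := by
  set s := spectralCut δ (star x * x)
  have hs : IsStarProjection s := isStarProjection_spectralCut δ _
  have hcomm : star x * x * s = s * (star x * x) :=
    (commute_spectralCut (.star_mul_self x) δ).eq
  have horth : star (x * s) * (x * (1 - s)) = 0 := by
    rw [star_mul, hs.isSelfAdjoint.star_eq, mul_assoc, ← mul_assoc (star x), ← mul_assoc, ← hcomm,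
      mul_assoc, hs.mul_one_sub_self, mul_zero]
  have hsplit := norm_add_apply_sq_of_orthogonal horth ξ
  rw [← mul_add, add_sub_cancel, mul_one] at hsplit
  have hzero : s (ξ - s ξ) = 0 := congr($(hs.mul_one_sub_self) ξ)
  have hsmall : ‖x (ξ - s ξ)‖ ^ 2 ≤ δ * ‖ξ - s ξ‖ ^ 2 := by
    rw [norm_apply_sq_eq_re_inner]
    exact re_inner_le_of_spectralCut_apply_eq_zero (.star_mul_self x) hzero
  exact hsplit.trans_le (add_le_add_right hsmall _)

theorem exists_isApproxPolarPart (hx : x ∈ M) (hδ : 0 < δ) : ∃ u, IsApproxPolarPart M δ x u := by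
  set h := star x * x with hh
  have hM : h ∈ M := mul_mem (star_mem hx) hx
  have hsa : IsSelfAdjoint h := .star_mul_self x
  set s := spectralCut δ h
  set b := cutInvSqrt δ h
  have hs : IsProjIn M s := isProjIn_spectralCut hM δ
  have hbM : b ∈ M := cfc_real_mem hM _
  have hb : star b = b := isSelfAdjoint_cutInvSqrt δ h
  have hbs : b * h * b * s = s := by
    have hone := mul_spectralCut_congr (x := b * h * b) (y := 1) (h := h) (δ := δ) <| by
      rw [cutInvSqrt_mul_mul_cutExcess hsa hδ, one_mul]
    rwa [one_mul] at hone
  have hstar : star (x * (b * s)) = s * (b * star x) := by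
    simp only [star_mul, hs.star_eq, hb, mul_assoc]
  have hus : star (x * (b * s)) * (x * (b * s)) = s := by
    calc _ = s * (b * h * b * s) := by rw [hstar, hh]; simp only [mul_assoc]
      _ = s := by rw [hbs, hs.2.2]
  refine ⟨x * (b * s), mul_mem hx (mul_mem hbM hs.1),
    isPartialIsometry_of_star_mul_self hus hs.2.2, ⟨b * s, mul_mem hbM hs.1, rfl⟩, ?_, ?_, ?_⟩
  · intro r hr
    rw [mul_assoc, mul_assoc, spectralCut_mul_eq_self hsa hδ (by rw [hh, mul_assoc, hr])]
  · intro ξ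
    have hle : ‖star (x * (b * s)) ξ‖ ≤ ‖b‖ * ‖star x ξ‖ := by
      rw [hstar]
      exact (norm_apply_le_of_isStarProjection hs.isStarProjection _).trans (b.le_opNorm _)
    calc δ * ‖star (x * (b * s)) ξ‖ ^ 2 ≤ δ * (‖b‖ * ‖star x ξ‖) ^ 2 := by gcongr
      _ = ‖b‖ ^ 2 * δ * ‖star x ξ‖ ^ 2 := by ring
      _ ≤ 1 * ‖star x ξ‖ ^ 2 := by gcongr; exact norm_cutInvSqrt_sq_mul_le h hδ
      _ = ‖star x ξ‖ ^ 2 := one_mul _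
  · rw [hus]
    exact norm_apply_sq_le_spectralCut x δ

theorem exists_isPartialIsometry_ne_zero (hx : x ∈ M) (hx0 : x ≠ 0) :
    ∃ u ∈ M, IsPartialIsometry u ∧ u ≠ 0 ∧ (∃ c ∈ M, u = x * c) ∧
      ∀ r, x * r = x → u * r = u := by
  have hn : 0 < ‖x‖ := norm_pos_iff.2 hx0
  obtain ⟨u, hu⟩ := exists_isApproxPolarPart hx (δ := ‖x‖ ^ 2 / 4) (by positivity)
  refine ⟨u, hu.mem, hu.isPartialIsometry, ?_, hu.exists_eq_mul, hu.mul_eq_self⟩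
  rintro rfl
  have hhalf : ‖x‖ ≤ ‖x‖ / 2 := by
    refine x.opNorm_le_bound (by positivity) fun ξ => le_of_sq_le_sq ?_ (by positivity)
    have hξ := hu.norm_apply_sq_le ξ
    simp only [mul_zero, zero_apply, map_zero, norm_zero, sub_zero] at hξ
    nlinarith
  linarith

end ApproximatePolarDecomposition

section ExtensionOrder

variable {R : Type*} [Semigroup R] [StarMul R] {u v w t : R}

/-- The extension relation of partial isometries: `w` agrees with `v` on the initial space of `v`,
and `w*` agrees with `v*` on the final space of `v`. -/
def IsExtendedBy (v w : R) : Prop := w * (star v * v) = v ∧ v * star v * w = v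

theorem IsExtendedBy.star (h : IsExtendedBy v w) : IsExtendedBy (star v) (star w) :=
  ⟨by simpa using congr(Star.star $(h.2)), by simpa using congr(Star.star $(h.1))⟩

theorem IsPartialIsometry.isExtendedBy_self (hv : IsPartialIsometry v) : IsExtendedBy v v :=
  ⟨hv.mul_star_mul_self, hv⟩

theorem IsExtendedBy.star_mul_eq (h : IsExtendedBy v w) (hv : IsPartialIsometry v) :
    Star.star w * v = Star.star v * v := by
  nth_rewrite 1 [← hv.mul_star_mul_self]
  rw [← mul_assoc v, ← mul_assoc]
  simpa using congr($(h.star.1) * v)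

theorem IsExtendedBy.trans (h : IsExtendedBy v w) (h' : IsExtendedBy w t)
    (hv : IsPartialIsometry v) : IsExtendedBy v t := by
  have hleft : ∀ {v w t : R}, IsPartialIsometry v → IsExtendedBy v w → IsExtendedBy w t →
      t * (Star.star v * v) = v := fun {v w t} hv h h' => by
    calc t * (Star.star v * v) = t * (Star.star w * w) * (Star.star v * v) := by
          rw [mul_assoc, mul_assoc _ w, h.1, h.star_mul_eq hv]
      _ = v := by rw [h'.1, h.1]
  exact ⟨hleft hv h h', by simpa using congr(Star.star $(hleft hv.star h.star h'.star))⟩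

theorem IsPartialIsometry.isExtendedBy_add {R : Type*} [NonUnitalRing R] [StarRing R] {u v : R}
    (hv : IsPartialIsometry v) (h : Star.star v * u = 0) (h' : v * Star.star u = 0) :
    IsExtendedBy v (v + u) := by
  have huv : u * Star.star v = 0 := by simpa using congr(Star.star $h')
  constructor
  · rw [add_mul, hv.mul_star_mul_self, mul_mul_of_mul_eq huv, zero_mul, add_zero]
  · rw [mul_add, hv, mul_assoc, h, mul_zero, add_zero]

end ExtensionOrder

section MonotoneLimit

theorem exists_tendsto_of_norm_sub_sq_le {E ι : Type*} [NormedAddCommGroup E] [CompleteSpace E]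
    [Preorder ι] [IsDirectedOrder ι] [Nonempty ι] {x : ι → E} {a : ι → ℝ}
    (h : ∀ i j, i ≤ j → ‖x j - x i‖ ^ 2 ≤ a j - a i) (ha : BddAbove (Set.range a)) :
    ∃ y, Tendsto x atTop (𝓝 y) := by
  have hmono : Monotone a := fun i j hij => sub_nonneg.1 ((sq_nonneg _).trans (h i j hij))
  refine CompleteSpace.complete (Metric.cauchy_iff.2 ⟨inferInstance, fun ε hε => ?_⟩)
  obtain ⟨i, hi⟩ := ((tendsto_atTop_ciSup hmono ha).eventually
    (lt_mem_nhds (sub_lt_self (⨆ i, a i) (by positivity : 0 < (ε / 2) ^ 2)))).exists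
  have hclose : ∀ j, i ≤ j → dist (x j) (x i) < ε / 2 := fun j hj => by
    rw [dist_eq_norm]
    refine lt_of_pow_lt_pow_left₀ 2 (by positivity) ?_
    linarith [h i j hj, le_ciSup ha j]
  refine ⟨x '' Set.Ici i, image_mem_map (Ici_mem_atTop i), ?_⟩
  rintro _ ⟨j, hj, rfl⟩ _ ⟨k, hk, rfl⟩
  linarith [dist_triangle_right (x j) (x k) (x i), hclose j hj, hclose k hk]

theorem exists_clm_tendsto_apply {𝕜 E F ι : Type*} [NontriviallyNormedField 𝕜]
    [SeminormedAddCommGroup E] [NormedSpace 𝕜 E] [NormedAddCommGroup F] [NormedSpace 𝕜 F]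
    {l : Filter ι} [l.NeBot] {v : ι → E →L[𝕜] F} {C : ℝ}
    (hv : ∀ i ξ, ‖v i ξ‖ ≤ C * ‖ξ‖) (h : ∀ ξ, ∃ η, Tendsto (fun i => v i ξ) l (𝓝 η)) :
    ∃ w : E →L[𝕜] F, ∀ ξ, Tendsto (fun i => v i ξ) l (𝓝 (w ξ)) := by
  choose f hf using h
  let g : E →ₗ[𝕜] F := linearMapOfTendsto f (fun i => (v i : E →ₗ[𝕜] F)) (tendsto_pi_nhds.2 hf)
  exact ⟨g.mkContinuous C fun ξ =>
    le_of_tendsto (hf ξ).norm (Eventually.of_forall fun i => hv i ξ), hf⟩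

theorem mul_mul_eq_of_tendsto_apply {R E ι : Type*} [Semiring R] [AddCommMonoid E] [Module R E]
    [TopologicalSpace E] [T2Space E] {l : Filter ι} [l.NeBot] {v v' : ι → E →L[R] E}
    {a b w w' : E →L[R] E} (hv : ∀ ξ, Tendsto (fun i => v i ξ) l (𝓝 (w ξ)))
    (hv' : ∀ ξ, Tendsto (fun i => v' i ξ) l (𝓝 (w' ξ))) (h : ∀ᶠ i in l, a * v i * b = v' i) :
    a * w * b = w' := by
  ext ξ
  refine tendsto_nhds_unique ((a.continuous.tendsto _).comp (hv (b ξ))) ((hv' ξ).congr' ?_)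
  filter_upwards [h] with i hi
  exact congr($hi.symm ξ)

theorem eq_star_of_tendsto_apply {ι : Type*} {l : Filter ι} [l.NeBot] {v : ι → H →L[ℂ] H}
    {w w' : H →L[ℂ] H} (hv : ∀ ξ, Tendsto (fun i => v i ξ) l (𝓝 (w ξ)))
    (hv' : ∀ ξ, Tendsto (fun i => star (v i) ξ) l (𝓝 (w' ξ))) : w' = star w := by
  rw [star_eq_adjoint, eq_adjoint_iff]
  intro ξ η
  refine tendsto_nhds_unique ((hv' ξ).inner tendsto_const_nhds)
    ((tendsto_const_nhds.inner (hv η)).congr fun i => ?_)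
  rw [star_eq_adjoint, adjoint_inner_left]

variable {M : VonNeumannAlgebra H} {v w : H →L[ℂ] H}

theorem IsExtendedBy.norm_sub_apply_sq (h : IsExtendedBy v w) (hv : IsPartialIsometry v) (ξ : H) :
    ‖w ξ - v ξ‖ ^ 2 = ‖w ξ‖ ^ 2 - ‖v ξ‖ ^ 2 := by
  have hwv : Star.star v * (w - v) = 0 := by
    rw [mul_sub, sub_eq_zero]
    simpa using congr(Star.star $(h.star_mul_eq hv))
  have hsum := norm_add_apply_sq_of_orthogonal hwv ξ
  rw [add_sub_cancel] at hsum
  exact eq_sub_of_add_eq' hsum.symm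

theorem exists_tendsto_apply_of_isExtendedBy {ι : Type*} [Preorder ι] [IsDirectedOrder ι]
    [Nonempty ι] {v : ι → H →L[ℂ] H} (hv : ∀ i, IsPartialIsometry (v i))
    (hmono : ∀ i j, i ≤ j → IsExtendedBy (v i) (v j)) :
    ∃ w : H →L[ℂ] H, ∀ ξ, Tendsto (fun i => v i ξ) atTop (𝓝 (w ξ)) := by
  refine exists_clm_tendsto_apply (C := 1) (fun i ξ => by simpa using (hv i).norm_apply_le ξ)
    fun ξ => exists_tendsto_of_norm_sub_sq_le (a := fun i => ‖v i ξ‖ ^ 2)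
      (fun i j hij => ((hmono i j hij).norm_sub_apply_sq (hv i) ξ).le) ⟨‖ξ‖ ^ 2, ?_⟩
  rintro _ ⟨i, rfl⟩
  exact pow_le_pow_left₀ (norm_nonneg _) ((hv i).norm_apply_le ξ) 2

theorem exists_isPartialIsometry_tendsto {ι : Type*} [Preorder ι] [IsDirectedOrder ι]
    [Nonempty ι] {v : ι → H →L[ℂ] H} (hM : ∀ i, v i ∈ M) (hv : ∀ i, IsPartialIsometry (v i))
    (hmono : ∀ i j, i ≤ j → IsExtendedBy (v i) (v j)) :
    ∃ w ∈ M, IsPartialIsometry w ∧ (∀ i, IsExtendedBy (v i) w) ∧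
      (∀ ξ, Tendsto (fun i => v i ξ) atTop (𝓝 (w ξ))) ∧
      ∀ ξ, Tendsto (fun i => star (v i) ξ) atTop (𝓝 (star w ξ)) := by
  obtain ⟨w, hw⟩ := exists_tendsto_apply_of_isExtendedBy hv hmono
  obtain ⟨w', hw'⟩ := exists_tendsto_apply_of_isExtendedBy (fun i => (hv i).star)
    fun i j hij => (hmono i j hij).star
  obtain rfl := eq_star_of_tendsto_apply hw hw'
  have hext : ∀ i, IsExtendedBy (v i) w := fun i => by
    constructor
    · rw [← one_mul w]
      refine mul_mul_eq_of_tendsto_apply hw (fun _ => tendsto_const_nhds) ?_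
      filter_upwards [Ici_mem_atTop i] with j hj
      rw [one_mul, (hmono i j hj).1]
    · rw [← mul_one (_ * w)]
      refine mul_mul_eq_of_tendsto_apply hw (fun _ => tendsto_const_nhds) ?_
      filter_upwards [Ici_mem_atTop i] with j hj
      rw [mul_one, (hmono i j hj).2]
  refine ⟨w, mem_of_tendsto_apply (.of_forall hM) hw, ?_, hext, hw, hw'⟩
  rw [IsPartialIsometry, ← mul_one (_ * w)]
  refine mul_mul_eq_of_tendsto_apply hw hw (.of_forall fun i => ?_)
  rw [mul_one, mul_assoc, (hext i).star_mul_eq (hv i), (hext i).1]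

end MonotoneLimit

section Maximality

variable {M : VonNeumannAlgebra H} {e f : H →L[ℂ] H}

/-- The partial isometries belonging to `M`, preordered by extension. -/
structure PartialIsometryIn (M : VonNeumannAlgebra H) where
  val : H →L[ℂ] H
  mem : val ∈ M
  isPartialIsometry : IsPartialIsometry val

instance (M : VonNeumannAlgebra H) : Preorder (PartialIsometryIn M) where
  le v w := IsExtendedBy v.val w.val
  le_refl v := v.isPartialIsometry.isExtendedBy_self
  le_trans v _ _ h h' := h.trans h' v.isPartialIsometry

theorem exists_upperBound_tendsto_of_isChain {c : Set (PartialIsometryIn M)}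
    (hc : IsChain (· ≤ ·) c) (hne : c.Nonempty) :
    ∃ (w : PartialIsometryIn M) (l : Filter c), (∀ v ∈ c, v ≤ w) ∧ l.NeBot ∧
      (∀ ξ, Tendsto (fun v : c => v.1.val ξ) l (𝓝 (w.val ξ))) ∧
      ∀ ξ, Tendsto (fun v : c => star v.1.val ξ) l (𝓝 (star w.val ξ)) := by
  have : Nonempty c := hne.to_subtype
  have : IsDirectedOrder c := ⟨hc.directedOn.directed_val⟩
  obtain ⟨w, hwM, hw, hext, hlim, hlim'⟩ := exists_isPartialIsometry_tendsto
    (v := fun v : c => v.1.val) (fun v => v.1.mem) (fun v => v.1.isPartialIsometry)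
    fun _ _ h => h
  exact ⟨⟨w, hwM, hw⟩, atTop, fun v hv => hext ⟨v, hv⟩, inferInstance, hlim, hlim'⟩

theorem exists_maximal_isPartialIsometry (M : VonNeumannAlgebra H) (e f : H →L[ℂ] H) (c : ℝ)
    (ξ : H) :
    ∃ v, Maximal (fun v : PartialIsometryIn M => v.val * e = v.val ∧ f * v.val = v.val ∧
      c * ‖star v.val ξ‖ ^ 2 ≤ ‖v.val ξ‖ ^ 2) v := by
  refine (zorn_le_nonempty₀ {v : PartialIsometryIn M | v.val * e = v.val ∧ f * v.val = v.val ∧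
      c * ‖star v.val ξ‖ ^ 2 ≤ ‖v.val ξ‖ ^ 2} (fun C hCS hC y hy => ?_)
    ⟨0, zero_mem M, isPartialIsometry_zero⟩ (by simp)).imp fun v hv => hv.2
  obtain ⟨w, l, hub, hl, hlim, hlim'⟩ := exists_upperBound_tendsto_of_isChain hC ⟨y, hy⟩
  refine ⟨w, ⟨?_, ?_, ?_⟩, hub⟩
  · rw [← one_mul w.val]
    exact mul_mul_eq_of_tendsto_apply hlim (by simpa using hlim)
      (.of_forall fun v => by rw [one_mul, (hCS v.2).1])
  · rw [← mul_one (f * w.val)]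
    exact mul_mul_eq_of_tendsto_apply hlim hlim
      (.of_forall fun v => by rw [mul_one, (hCS v.2).2.1])
  · exact le_of_tendsto_of_tendsto (((hlim' ξ).norm.pow 2).const_mul c) ((hlim ξ).norm.pow 2)
      (.of_forall fun v => (hCS v.2).2.2)

theorem exists_isPartialIsometry_saturated (he : IsProjIn M e) (hf : IsProjIn M f) (c : ℝ)
    (ξ : H) :
    ∃ v ∈ M, IsPartialIsometry v ∧ v * e = v ∧ f * v = v ∧
      c * ‖star v ξ‖ ^ 2 ≤ ‖v ξ‖ ^ 2 ∧
      ∀ u ∈ M, IsPartialIsometry u → u * (e - star v * v) = u → (f - v * star v) * u = u →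
        c * ‖star u ξ‖ ^ 2 ≤ ‖u ξ‖ ^ 2 → u = 0 := by
  obtain ⟨⟨v, hvM, hv⟩, ⟨hve, hfv, hvξ⟩, hmax⟩ := exists_maximal_isPartialIsometry M e f c ξ
  refine ⟨v, hvM, hv, hve, hfv, hvξ, fun u huM hu hue hfu huξ => ?_⟩
  have hvu : star v * u = 0 := by
    rw [← hfu, ← mul_assoc, hv.star_mul_sub_mul_star_self hf.2.1 hfv, zero_mul]
  have huv : v * star u = 0 := by
    have hsa : IsSelfAdjoint (e - star v * v) := he.2.1.sub (.star_mul_self v)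
    rw [← mul_star_of_mul_eq hsa hue, ← mul_assoc, hv.mul_sub_star_mul_self hve, zero_mul]
  have hue' : u * e = u := by
    nth_rewrite 2 [← hue]
    rw [mul_sub, ← mul_assoc, show u * star v = 0 by simpa using congr(star $huv), zero_mul,
      sub_zero]
  have hfu' : f * u = u := by
    nth_rewrite 2 [← hfu]
    rw [sub_mul, mul_assoc, hvu, mul_zero, sub_zero]
  have hadd : c * ‖star (v + u) ξ‖ ^ 2 ≤ ‖(v + u) ξ‖ ^ 2 := by
    rw [norm_add_apply_sq_of_orthogonal hvu, star_add,
      norm_add_apply_sq_of_orthogonal (by simpa using huv)]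
    linarith
  have hback : IsExtendedBy (v + u) v :=
    @hmax ⟨v + u, add_mem hvM huM, hv.add hu hvu huv⟩
      ⟨by rw [add_mul, hve, hue'], by rw [mul_add, hfv, hfu'], hadd⟩
      (hv.isExtendedBy_add hvu huv)
  have hsum : v * (star v * v + star u * u) = v + u := by
    rw [← star_add_mul_add_of_orthogonal hvu, hback.1]
  rw [mul_add, hv.mul_star_mul_self, ← mul_assoc, huv, zero_mul] at hsum
  simpa using hsum.symm

end Maximality

section Comparison

variable {M : VonNeumannAlgebra H} {a b e f x y z : H →L[ℂ] H}

theorem IsCentralProj.commute (hz : IsCentralProj M z) (hx : x ∈ M) : Commute z x := hz.2 x hx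

theorem IsCentralProj.one_sub (hz : IsCentralProj M z) : IsCentralProj M (1 - z) :=
  ⟨isProjIn_iff.2 ⟨sub_mem (one_mem M) hz.1.1, hz.1.isStarProjection.one_sub⟩,
    fun _ hx => ((Commute.one_left _).sub_left (hz.commute hx)).eq⟩

theorem IsCentralProj.mul (hy : IsCentralProj M y) (hz : IsCentralProj M z) :
    IsCentralProj M (y * z) :=
  ⟨isProjIn_iff.2 ⟨mul_mem hy.1.1 hz.1.1,
      hy.1.isStarProjection.mul hz.1.isStarProjection (hy.commute hz.1.1)⟩,
    fun _ hx => ((hy.commute hx).mul_left (hz.commute hx)).eq⟩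

theorem isCentralProj_closedSpanProj {S : Set H} (hM : ∀ m ∈ M, ∀ η ∈ S, m η ∈ S)
    (hM' : ∀ y ∈ M.commutant, ∀ η ∈ S, y η ∈ S) : IsCentralProj M (closedSpanProj S) := by
  refine ⟨isProjIn_closedSpanProj hM', fun x hx => ?_⟩
  have hcomm : closedSpanProj S ∈ M.commutant :=
    (isProjIn_closedSpanProj (M := M.commutant)
      (by rwa [VonNeumannAlgebra.commutant_commutant])).1
  exact (commute_of_mem_commutant hcomm hx).eq.symm

theorem exists_isCentralProj_separating (ha : a ∈ M) (h : ∀ m ∈ M, b * m * a = 0) :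
    ∃ z, IsCentralProj M z ∧ z * a = a ∧ b * z = 0 := by
  let S : Set H := {ζ | ∃ m ∈ M, ∃ η, ζ = m (a η)}
  refine ⟨closedSpanProj S, isCentralProj_closedSpanProj ?_ ?_, ?_, ?_⟩
  · rintro m hm _ ⟨m', hm', η, rfl⟩
    exact ⟨m * m', mul_mem hm hm', η, rfl⟩
  · rintro y hy _ ⟨m, hm, η, rfl⟩
    exact ⟨m, hm, y η, congr($((commute_of_mem_commutant hy (mul_mem hm ha)).eq.symm) η)⟩
  · exact ContinuousLinearMap.ext fun η => closedSpanProj_apply_of_mem ⟨1, one_mem M, η, rfl⟩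
  · refine mul_closedSpanProj_eq_zero ?_
    rintro _ ⟨m, hm, η, rfl⟩
    exact congr($(h m hm) η)

theorem exists_comparison (he : IsProjIn M e) (hf : IsProjIn M f) :
    ∃ v ∈ M, IsPartialIsometry v ∧ v * e = v ∧ f * v = v ∧ ∃ z, IsCentralProj M z ∧
      z * (e - star v * v) = e - star v * v ∧ z * (f - v * star v) = 0 := by
  obtain ⟨v, hvM, hv, hve, hfv, -, hmax⟩ := exists_isPartialIsometry_saturated he hf 0 0
  have he' := hv.isProjIn_sub_star_mul_self hvM he hve
  have hf' := hv.isProjIn_sub_mul_star_self hvM hf hfv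
  have hcorner : ∀ m ∈ M, (f - v * star v) * m * (e - star v * v) = 0 := by
    intro m hm
    by_contra hne
    obtain ⟨u, huM, hu, hu0, ⟨c, -, huc⟩, hr⟩ :=
      exists_isPartialIsometry_ne_zero (mul_mem (mul_mem hf'.1 hm) he'.1) hne
    refine hu0 (hmax u huM hu (hr _ (by rw [mul_assoc, he'.2.2])) ?_ (by simp))
    simp only [huc, ← mul_assoc, hf'.2.2]
  obtain ⟨z, hz, hze, hfz⟩ := exists_isCentralProj_separating he'.1 hcorner
  exact ⟨v, hvM, hv, hve, hfv, z, hz, hze, by rw [hz.2 _ hf'.1, hfz]⟩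

end Comparison

section FiniteProjection

variable {M : VonNeumannAlgebra H} {c p q r v x : H →L[ℂ] H}

theorem FiniteProj.mul_star_eq (hfin : FiniteProj M p) (hp : IsProjIn M p) {T : H →L[ℂ] H}
    (hT : T ∈ M) (hTp : star T * T = p) (hpT : p * T = T) : T * star T = p := by
  have hTpi : IsPartialIsometry T := isPartialIsometry_of_star_mul_self hTp hp.2.2
  refine hfin _ (hTpi.isProjIn_mul_star_self hT) ⟨?_, ?_⟩ ⟨T, hT, hTp, rfl⟩
  · rw [mul_assoc, star_mul_of_mul_eq hp.2.1 hpT]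
  · rw [← mul_assoc, hpT]

theorem FiniteProj.mul_star_self_eq_star_mul_self (hfin : FiniteProj M p) (hp : IsProjIn M p)
    (hvM : v ∈ M) (hv : IsPartialIsometry v) (hvp : v * p = v) (hpv : p * v = v)
    (hvv : star v * v * v = v) : v * star v = star v * v := by
  set d := p - star v * v with hd
  have hdp : IsProjIn M d := hv.isProjIn_sub_star_mul_self hvM hp hvp
  have hvd : v * star d = 0 := by rw [hdp.star_eq, hv.mul_sub_star_mul_self hvp]
  have hdv : star v * d = 0 := by
    rw [hd, mul_sub, star_mul_of_mul_eq hp.2.1 hpv,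
      star_mul_of_mul_eq (.star_mul_self v) hvv, sub_self]
  have hT := hfin.mul_star_eq hp (add_mem hvM hdp.1)
    (by rw [star_add_mul_add_of_orthogonal hdv, hdp.star_eq, hdp.2.2, hd, add_sub_cancel])
    (by rw [mul_add, hpv, hd, mul_sub, hp.2.2, ← mul_assoc, mul_star_of_mul_eq hp.2.1 hvp])
  have hTT := add_mul_star_add_of_orthogonal hvd
  rw [hT, hdp.star_eq, hdp.2.2, hd] at hTT
  rw [← sub_eq_zero, ← sub_eq_zero.2 hTT.symm]
  abel

theorem FiniteProj.mono (hfin : FiniteProj M p) (hp : IsProjIn M p) (hr : IsProjIn M r)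
    (hrp : ProjLE r p) : FiniteProj M r := by
  rintro q - ⟨-, hrq⟩ ⟨x, hxM, hxr, hxq⟩
  replace hxr : star x * x = r := hxr
  replace hxq : x * star x = q := hxq
  have hx : IsPartialIsometry x := isPartialIsometry_of_star_mul_self hxr hr.2.2
  have hxr' : x * r = x := mul_eq_self_of_star_mul_self hxr hr.2.2
  have hrx : r * x = x := by rw [← hx, hxq, ← mul_assoc, hrq]
  rw [← hxq, ← hxr]
  refine hfin.mul_star_self_eq_star_mul_self hp hxM hx ?_ ?_ (by rw [hxr, hrx])
  · rw [← hxr', mul_assoc, hrp.1]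
  · rw [← hrx, ← mul_assoc, hrp.2]

theorem FiniteProj.central_mul_sub_mul_star_self_eq_zero (hfin : FiniteProj M q) (hq : IsProjIn M q)
    (hxM : x ∈ M) (hx : IsPartialIsometry x) (hxq : x * q = x) (hqx : q * x = x)
    (hc : IsCentralProj M c) (h : c * (q - star x * x) = 0) : c * (q - x * star x) = 0 := by
  rw [mul_sub, sub_eq_zero, eq_comm] at h ⊢
  have hcx := hc.commute hxM
  have hcx' := hc.commute (star_mem hxM)
  have hcq := hc.commute hq.1
  have hleft : star (c * x) * (c * x) = c * (star x * x) := by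
    rw [star_mul, hc.1.star_eq, ← hcx'.eq, mul_assoc, mul_mul_of_mul_eq hcx'.eq.symm, mul_assoc,
      mul_mul_of_mul_eq hc.1.2.2]
  have hright : c * x * star (c * x) = c * (x * star x) := by
    rw [star_mul, hc.1.star_eq, ← hcx'.eq, mul_assoc, mul_mul_of_mul_eq hcx.eq.symm, mul_assoc,
      mul_mul_of_mul_eq hc.1.2.2]
  have hv : IsPartialIsometry (c * x) := by
    rw [IsPartialIsometry, hright, mul_assoc, mul_assoc x, ← mul_assoc _ c, ← hcx'.eq, mul_assoc c,
      mul_mul_of_mul_eq hcx.eq.symm, mul_assoc c, mul_mul_of_mul_eq hc.1.2.2,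
      hx.mul_star_mul_self]
  rw [← hright, hfin.mul_star_self_eq_star_mul_self hq (mul_mem hc.1.1 hxM) hv, hleft, h]
  · rw [mul_assoc, hxq]
  · rw [← mul_assoc, ← hcq.eq, mul_assoc, hqx]
  · rw [hleft, h, mul_assoc, ← mul_assoc q, ← hcq.eq, mul_assoc c, hqx, mul_mul_of_mul_eq hc.1.2.2]

theorem FiniteProj.exists_complement_equiv (hfin : FiniteProj M q) (hq : IsProjIn M q)
    (hxM : x ∈ M) (hx : IsPartialIsometry x) (hxq : x * q = x) (hqx : q * x = x) :
    ∃ w ∈ M, star w * w = q - star x * x ∧ w * star w = q - x * star x := by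
  have hA := hx.isProjIn_sub_star_mul_self hxM hq hxq
  have hB := hx.isProjIn_sub_mul_star_self hxM hq hqx
  obtain ⟨v, hvM, hv, hvA, hBv, z, hz, hzA, hzB⟩ := exists_comparison hA hB
  have hvq : v * q = v := by
    rw [← hvA, mul_assoc, sub_mul, hq.2.2, mul_assoc, hxq]
  have hqv : q * v = v := by
    rw [← hBv, ← mul_assoc, mul_sub, hq.2.2, ← mul_assoc, hqx]
  have hxv : star x * v = 0 := by
    rw [← hBv, ← mul_assoc, hx.star_mul_sub_mul_star_self hq.2.1 hqx, zero_mul]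
  have hxv' : x * star v = 0 := by
    rw [← mul_star_of_mul_eq hA.2.1 hvA, ← mul_assoc, hx.mul_sub_star_mul_self hxq, zero_mul]
  set y := x + v with hy
  have hyM : y ∈ M := add_mem hxM hvM
  have hypi : IsPartialIsometry y := hx.add hv hxv hxv'
  have hyq : y * q = y := by rw [hy, add_mul, hxq, hvq]
  have hqy : q * y = y := by rw [hy, mul_add, hqx, hqv]
  have hyy : q - star y * y = q - star x * x - star v * v := by
    rw [hy, star_add_mul_add_of_orthogonal hxv, sub_sub]
  have hyy' : q - y * star y = q - x * star x - v * star v := by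
    rw [hy, add_mul_star_add_of_orthogonal hxv', sub_sub]
  rw [← hyy] at hzA
  rw [← hyy'] at hzB
  have hinit : z * (q - star y * y) = 0 := by
    simpa using hfin.central_mul_sub_mul_star_self_eq_zero hq (star_mem hyM) hypi.star
      (star_mul_of_mul_eq hq.2.1 hqy) (mul_star_of_mul_eq hq.2.1 hyq) hz (by rwa [star_star])
  have hfinal : (1 - z) * (q - y * star y) = 0 :=
    hfin.central_mul_sub_mul_star_self_eq_zero hq hyM hypi hyq hqy hz.one_sub
      (by rw [sub_mul, hzA, one_mul, sub_self])
  refine ⟨v, hvM, ?_, ?_⟩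
  · rw [hzA, hyy] at hinit
    exact (sub_eq_zero.1 hinit).symm
  · rw [sub_mul, one_mul, hzB, sub_zero, hyy'] at hfinal
    exact (sub_eq_zero.1 hfinal).symm

end FiniteProjection

section OrthogonalCopies

section PartialShift

variable {R : Type*} [NonUnitalRing R] [StarRing R] {w : ℕ → R} {b : R}

/-- The partial sums of the unilateral shift carrying the final space of `w k` onto that of
`w (k + 1)`. -/
def partialShift (w : ℕ → R) (n : ℕ) : R := ∑ k ∈ Finset.range n, w (k + 1) * star (w k)

theorem partialShift_mul (hw : ∀ m n, star (w m) * w n = if m = n then b else 0)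
    (hwb : ∀ n, w n * b = w n) (n k : ℕ) :
    partialShift w n * w k = if k < n then w (k + 1) else 0 := by
  simp [partialShift, Finset.sum_mul, mul_assoc, hw, hwb]

theorem star_partialShift_mul_succ (hw : ∀ m n, star (w m) * w n = if m = n then b else 0)
    (hwb : ∀ n, w n * b = w n) (n k : ℕ) :
    star (partialShift w n) * w (k + 1) = if k < n then w k else 0 := by
  simp [partialShift, Finset.sum_mul, mul_assoc, hw, hwb]

theorem star_partialShift_mul_zero (hw : ∀ m n, star (w m) * w n = if m = n then b else 0)
    (n : ℕ) : star (partialShift w n) * w 0 = 0 := by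
  simp [partialShift, Finset.sum_mul, mul_assoc, hw]

theorem partialShift_mul_star_mul (hw : ∀ m n, star (w m) * w n = if m = n then b else 0)
    (hwb : ∀ n, w n * b = w n) (l m n : ℕ) :
    partialShift w l * (star (partialShift w m) * partialShift w n) =
      partialShift w (min (min l m) n) := by
  have hterm : ∀ k, partialShift w l * (star (partialShift w m) * (w (k + 1) * star (w k))) =
      if k < min l m then w (k + 1) * star (w k) else 0 := fun k => by
    rw [← mul_assoc _ (w _), star_partialShift_mul_succ hw hwb, ← mul_assoc]
    by_cases hm : k < m <;> simp [hm, partialShift_mul hw hwb, ite_mul]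
  conv_lhs => enter [2, 2]; rw [partialShift]
  simp_rw [Finset.mul_sum, hterm]
  rw [← Finset.sum_filter, partialShift]
  congr 1
  ext k
  simp only [Finset.mem_filter, Finset.mem_range, lt_min_iff, and_comm]

theorem isPartialIsometry_partialShift (hw : ∀ m n, star (w m) * w n = if m = n then b else 0)
    (hwb : ∀ n, w n * b = w n) (n : ℕ) : IsPartialIsometry (partialShift w n) := by
  rw [IsPartialIsometry, mul_assoc, partialShift_mul_star_mul hw hwb, min_self, min_self]

theorem isExtendedBy_partialShift (hw : ∀ m n, star (w m) * w n = if m = n then b else 0)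
    (hwb : ∀ n, w n * b = w n) {m n : ℕ} (hmn : m ≤ n) :
    IsExtendedBy (partialShift w m) (partialShift w n) := by
  constructor
  · rw [partialShift_mul_star_mul hw hwb, min_eq_right hmn, min_self]
  · rw [mul_assoc, partialShift_mul_star_mul hw hwb, min_self, min_eq_left hmn]

end PartialShift

variable {M : VonNeumannAlgebra H} {p b : H →L[ℂ] H} {w : ℕ → H →L[ℂ] H}

theorem exists_shift (hwM : ∀ n, w n ∈ M) (hpw : ∀ n, p * w n = w n) (hp : IsSelfAdjoint p)
    (hw : ∀ m n, star (w m) * w n = if m = n then b else 0) (hwb : ∀ n, w n * b = w n) :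
    ∃ v ∈ M, IsPartialIsometry v ∧ v * p = v ∧ p * v = v ∧ star v * v * v = v ∧
      star v * w 0 = 0 ∧ v * w 0 = w 1 ∧ star v * w 1 = w 0 := by
  obtain ⟨v, hvM, hv, hext, hlim, hlim'⟩ := exists_isPartialIsometry_tendsto (M := M)
    (v := partialShift w) (fun n => sum_mem fun k _ => mul_mem (hwM _) (star_mem (hwM k)))
    (isPartialIsometry_partialShift hw hwb) fun _ _ => isExtendedBy_partialShift hw hwb
  have hvw : ∀ k, v * w k = w (k + 1) := fun k => by
    have h : partialShift w (k + 1) * w k = w (k + 1) := by simp [partialShift_mul hw hwb]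
    have h' : star (partialShift w (k + 1)) * w (k + 1) = w k := by
      simp [star_partialShift_mul_succ hw hwb]
    rw [← h', ← h, ← mul_assoc (star _), ← mul_assoc, (hext (k + 1)).1]
  have hvw' : ∀ k, star v * w (k + 1) = w k := fun k => by
    have h : partialShift w (k + 1) * w k = w (k + 1) := by simp [partialShift_mul hw hwb]
    have h' : star (partialShift w (k + 1)) * w (k + 1) = w k := by
      simp [star_partialShift_mul_succ hw hwb]
    rw [← h, ← mul_assoc, (hext (k + 1)).star_mul_eq (isPartialIsometry_partialShift hw hwb _),
      mul_assoc, h, h']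
  refine ⟨v, hvM, hv, ?_, ?_, ?_, ?_, hvw 0, hvw' 0⟩
  · rw [← one_mul v]
    refine mul_mul_eq_of_tendsto_apply hlim (by simpa using hlim) (.of_forall fun n => ?_)
    simp [partialShift, Finset.sum_mul, mul_assoc, star_mul_of_mul_eq hp (hpw _)]
  · rw [← mul_one (p * v)]
    refine mul_mul_eq_of_tendsto_apply hlim hlim (.of_forall fun n => ?_)
    simp [partialShift, Finset.mul_sum, ← mul_assoc, hpw]
  · rw [← mul_one (_ * v)]
    refine mul_mul_eq_of_tendsto_apply hlim hlim (.of_forall fun n => ?_)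
    simp only [partialShift, mul_one, Finset.mul_sum]
    refine Finset.sum_congr rfl fun k _ => ?_
    rw [← mul_assoc, mul_assoc _ v, hvw, hvw']
  · rw [← one_mul (star v)]
    refine mul_mul_eq_of_tendsto_apply (w' := 0) hlim' (fun _ => tendsto_const_nhds)
      (.of_forall fun n => ?_)
    rw [one_mul, star_partialShift_mul_zero hw]

theorem FiniteProj.eq_zero_of_orthogonal_copies (hfin : FiniteProj M p) (hp : IsProjIn M p)
    (hb : IsIdempotentElem b) (hwM : ∀ n, w n ∈ M) (hpw : ∀ n, p * w n = w n)
    (hw : ∀ m n, star (w m) * w n = if m = n then b else 0) : b = 0 := by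
  have hww : ∀ n, star (w n) * w n = b := fun n => by simp [hw]
  obtain ⟨v, hvM, hv, hvp, hpv, hvv, hv0, hv1, hv1'⟩ := exists_shift hwM hpw hp.2.1 hw
    fun n => mul_eq_self_of_star_mul_self (hww n) hb
  have h := congr($(hfin.mul_star_self_eq_star_mul_self hp hvM hv hvp hpv hvv) * w 0)
  rw [mul_assoc, hv0, mul_zero, mul_assoc, hv1, hv1'] at h
  rw [← hww 0, ← h, mul_zero]

end OrthogonalCopies

section QuasiTrace

variable {M : VonNeumannAlgebra H} {a b g p : H →L[ℂ] H} {ξ : H}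

/-- The projection onto the cyclic subspace `[M'ξ]`, i.e. the support in `M` of the vector
state `ω_ξ`. -/
def cyclicProj (M : VonNeumannAlgebra H) (ξ : H) : H →L[ℂ] H :=
  closedSpanProj {ζ | ∃ y ∈ M.commutant, ζ = y ξ}

theorem isProjIn_cyclicProj (M : VonNeumannAlgebra H) (ξ : H) : IsProjIn M (cyclicProj M ξ) := by
  refine isProjIn_closedSpanProj ?_
  rintro y hy _ ⟨y', hy', rfl⟩
  exact ⟨y * y', mul_mem hy hy', rfl⟩

theorem cyclicProj_apply_self (M : VonNeumannAlgebra H) (ξ : H) : cyclicProj M ξ ξ = ξ :=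
  closedSpanProj_apply_of_mem ⟨1, one_mem _, rfl⟩

theorem mul_cyclicProj_eq_self (hg : g ∈ M) (hξ : g ξ = ξ) :
    g * cyclicProj M ξ = cyclicProj M ξ := by
  refine mul_closedSpanProj_eq_self ?_
  rintro _ ⟨y, hy, rfl⟩
  simpa [hξ] using congr($((commute_of_mem_commutant hy hg).eq) ξ)

theorem mul_cyclicProj_eq_zero (hg : g ∈ M) (hξ : g ξ = 0) : g * cyclicProj M ξ = 0 := by
  refine mul_closedSpanProj_eq_zero ?_
  rintro _ ⟨y, hy, rfl⟩
  simpa [hξ] using congr($((commute_of_mem_commutant hy hg).eq) ξ)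

/-- The vector `ξ` induces a quasi-trace between the equivalent projections `a` and `b`: its vector
state is faithful on `a`, and on partial isometries from `a` to `b` it is tracial up to the
factor `2`. -/
structure IsQuasiTracial (M : VonNeumannAlgebra H) (a b : H →L[ℂ] H) (ξ : H) : Prop where
  left : IsProjIn M a
  right : IsProjIn M b
  equiv : MvNEquiv M a b
  eq_zero_of_apply_eq_zero : ∀ g, IsProjIn M g → g * a = g → g ξ = 0 → g = 0
  norm_apply_sq_le : ∀ u ∈ M, IsPartialIsometry u → u * a = u → b * u = u →
    ‖u ξ‖ ^ 2 ≤ 2 * ‖star u ξ‖ ^ 2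

/- Remove from the support of `ω_ξ` a maximal partial isometry violating traciality by the
factor `2`; finiteness makes the two complements equivalent. -/
theorem exists_isQuasiTracial (hp : IsProjIn M p) (hfin : FiniteProj M p) (hp0 : p ≠ 0) :
    ∃ a b ξ, IsQuasiTracial M a b ξ ∧ b ≠ 0 ∧ p * b = b := by
  obtain ⟨ξ, hξ, hξ0⟩ : ∃ ξ, p ξ = ξ ∧ ξ ≠ 0 := by
    by_contra! h
    exact hp0 (ContinuousLinearMap.ext fun η => h (p η) congr($(hp.2.2) η))
  have hs := isProjIn_cyclicProj M ξ
  have hsξ := cyclicProj_apply_self M ξ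
  have hps := mul_cyclicProj_eq_self hp.1 hξ
  have hs0 : ∀ g ∈ M, g ξ = 0 → g * cyclicProj M ξ = 0 := fun g => mul_cyclicProj_eq_zero
  generalize cyclicProj M ξ = s at hs hsξ hps hs0
  have hsp : s * p = s := by simpa [hs.star_eq] using star_mul_of_mul_eq hp.2.1 hps
  obtain ⟨v, hvM, hv, hvs, hsv, hvξ, hmax⟩ := exists_isPartialIsometry_saturated hs hs 2 ξ
  have ha := hv.isProjIn_sub_star_mul_self hvM hs hvs
  have hb := hv.isProjIn_sub_mul_star_self hvM hs hsv
  refine ⟨s - star v * v, s - v * star v, ξ, ⟨ha, hb,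
    (hfin.mono hp hs ⟨hsp, hps⟩).exists_complement_equiv hs hvM hv hvs hsv, ?_, ?_⟩, ?_, ?_⟩
  · intro g hg hga hgξ
    have has : (s - star v * v) * s = s - star v * v := by rw [sub_mul, hs.2.2, mul_assoc, hvs]
    rw [← hga, ← has, ← mul_assoc, hga, hs0 g hg.1 hgξ]
  · intro u huM hu hua hbu
    by_contra! h
    rw [hmax u huM hu hua hbu h.le] at h
    simp at h
  · intro hb0
    have hnorm : ‖star v ξ‖ = ‖ξ‖ := by
      rw [norm_apply_eq_of_star_mul_self (e := s) (by rw [star_star, ← sub_eq_zero.1 hb0])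
        hs.isStarProjection, hsξ]
    rw [hnorm] at hvξ
    nlinarith [norm_pos_iff.2 hξ0, hv.norm_apply_le ξ, norm_nonneg (v ξ)]
  · rw [mul_sub, hps, ← mul_assoc, ← hsv, ← mul_assoc p, hps]

end QuasiTrace

section IdealCone

variable {M : VonNeumannAlgebra H} {a b m q x : H →L[ℂ] H} {ξ : H}

/-- The cone of finite sums `∑ y y*` with `y ∈ M b`: the positive part of the algebraic two-sided
ideal of `M` generated by `b`. -/
def idealCone (M : VonNeumannAlgebra H) (b : H →L[ℂ] H) : AddSubmonoid (H →L[ℂ] H) :=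
  AddSubmonoid.closure {q | ∃ y ∈ M, y * b = y ∧ y * star y = q}

theorem mul_star_self_mem_idealCone (hx : x ∈ M) (hxb : x * b = x) : x * star x ∈ idealCone M b :=
  AddSubmonoid.subset_closure ⟨x, hx, hxb, rfl⟩

theorem conjugate_mem_idealCone (hm : m ∈ M) (hq : q ∈ idealCone M b) :
    m * q * star m ∈ idealCone M b := by
  induction hq using AddSubmonoid.closure_induction with
  | mem q hq =>
    obtain ⟨y, hy, hyb, rfl⟩ := hq
    simpa [mul_assoc] using
      mul_star_self_mem_idealCone (mul_mem hm hy) (show m * y * b = m * y by rw [mul_assoc, hyb])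
  | zero => simp
  | add q r _ _ hq hr => simpa [mul_add, add_mul] using add_mem hq hr

theorem exists_mul_ne_zero_of_mem_idealCone (hq : q ∈ idealCone M b) (h : x * q ≠ 0) :
    ∃ y ∈ M, y * b = y ∧ x * y ≠ 0 := by
  contrapose! h
  induction hq using AddSubmonoid.closure_induction with
  | mem q hq =>
    obtain ⟨y, hy, hyb, rfl⟩ := hq
    rw [← mul_assoc, h y hy hyb, zero_mul]
  | zero => exact mul_zero x
  | add q r _ _ hq hr => rw [mul_add, hq, hr, add_zero]

theorem IsQuasiTracial.norm_apply_sq_le_of_mem (hQ : IsQuasiTracial M a b ξ) (hx : x ∈ M)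
    (hxa : x * a = x) (hbx : b * x = x) {δ : ℝ} (hδ : 0 < δ) :
    ‖x ξ‖ ^ 2 ≤ ‖x‖ ^ 2 * (2 * (δ⁻¹ * ‖star x ξ‖ ^ 2)) + δ * ‖ξ‖ ^ 2 := by
  obtain ⟨u, hu⟩ := exists_isApproxPolarPart hx hδ
  obtain ⟨c, -, huc⟩ := hu.exists_eq_mul
  have hs := hu.isPartialIsometry.isStarProjection_star_mul_self
  have hquasi := hQ.norm_apply_sq_le u hu.mem hu.isPartialIsometry (hu.mul_eq_self a hxa)
    (by rw [huc, ← mul_assoc, hbx])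
  have hstar : ‖star u ξ‖ ^ 2 ≤ δ⁻¹ * ‖star x ξ‖ ^ 2 :=
    (le_inv_mul_iff₀ hδ).2 (hu.norm_star_apply_sq_le ξ)
  have hmain : ‖x ((star u * u) ξ)‖ ^ 2 ≤ ‖x‖ ^ 2 * ‖u ξ‖ ^ 2 := by
    rw [norm_apply_eq_of_star_mul_self rfl hs, ← mul_pow]
    gcongr
    exact x.le_opNorm _
  have hrest : ‖ξ - (star u * u) ξ‖ ^ 2 ≤ ‖ξ‖ ^ 2 := by
    rw [norm_apply_sq_sub_of_isStarProjection hs]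
    exact sub_le_self _ (sq_nonneg _)
  calc ‖x ξ‖ ^ 2 ≤ ‖x ((star u * u) ξ)‖ ^ 2 + δ * ‖ξ - (star u * u) ξ‖ ^ 2 :=
        hu.norm_apply_sq_le ξ
    _ ≤ ‖x‖ ^ 2 * (2 * (δ⁻¹ * ‖star x ξ‖ ^ 2)) + δ * ‖ξ‖ ^ 2 := by
        refine add_le_add (hmain.trans ?_) (by gcongr)
        gcongr
        linarith

variable {ι : Type*} {l : Filter ι} {y : ι → H →L[ℂ] H} {C : ℝ}

theorem IsQuasiTracial.tendsto_apply_zero (hQ : IsQuasiTracial M a b ξ)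
    (hy : ∀ᶠ i in l, y i ∈ M ∧ ‖y i‖ ≤ C ∧ y i * a = y i ∧ b * y i = y i)
    (hlim : Tendsto (fun i => star (y i) ξ) l (𝓝 0)) : Tendsto (fun i => y i ξ) l (𝓝 0) := by
  refine NormedAddGroup.tendsto_nhds_zero.2 fun ε hε => ?_
  obtain ⟨δ, hδ, hδε⟩ : ∃ δ > 0, δ * ‖ξ‖ ^ 2 < ε ^ 2 :=
    ⟨ε ^ 2 / (‖ξ‖ ^ 2 + 1), by positivity, by
      rw [div_mul_eq_mul_div, div_lt_iff₀ (by positivity)]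
      nlinarith [pow_pos hε 2]⟩
  have hbound : Tendsto (fun i => C ^ 2 * (2 * (δ⁻¹ * ‖star (y i) ξ‖ ^ 2)) + δ * ‖ξ‖ ^ 2) l
      (𝓝 (δ * ‖ξ‖ ^ 2)) := by
    simpa using ((((hlim.norm.pow 2).const_mul δ⁻¹).const_mul 2).const_mul (C ^ 2)).add_const
      (δ * ‖ξ‖ ^ 2)
  filter_upwards [hbound.eventually (gt_mem_nhds hδε), hy] with i hi ⟨hM, hC, hya, hby⟩
  refine lt_of_pow_lt_pow_left₀ 2 hε.le (lt_of_le_of_lt ?_ hi)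
  refine (hQ.norm_apply_sq_le_of_mem hM hya hby hδ).trans ?_
  gcongr

theorem IsQuasiTracial.tendsto_apply_zero_of_mem_idealCone (hQ : IsQuasiTracial M a b ξ)
    (hq : q ∈ idealCone M b) (hy : ∀ᶠ i in l, y i ∈ M ∧ ‖y i‖ ≤ C ∧ y i * a = y i)
    (hlim : ∀ η, Tendsto (fun i => star (y i) η) l (𝓝 0)) :
    Tendsto (fun i => q (y i ξ)) l (𝓝 0) := by
  induction hq using AddSubmonoid.closure_induction with
  | mem q hq =>
    obtain ⟨m, hm, hmb, rfl⟩ := hq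
    have hcorner : Tendsto (fun i => (star m * y i) ξ) l (𝓝 0) := by
      refine hQ.tendsto_apply_zero (C := ‖star m‖ * C) ?_ (by simpa using hlim (m ξ))
      filter_upwards [hy] with i ⟨hM, hC, hya⟩
      refine ⟨mul_mem (star_mem hm) hM, (norm_mul_le _ _).trans (by gcongr), ?_, ?_⟩
      · rw [mul_assoc, hya]
      · rw [← mul_assoc, mul_star_of_mul_eq hQ.right.2.1 hmb]
    simpa [Function.comp_def] using (m.continuous.tendsto _).comp hcorner
  | zero => exact tendsto_const_nhds
  | add q r _ _ hq hr => simpa using hq.add hr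

end IdealCone

section VanishingCopies

variable {M : VonNeumannAlgebra H} {a b d q x : H →L[ℂ] H} {ξ : H}

/-- Copies `v* v = d` of a nonzero projection `d` inside `q` cannot satisfy `v* → 0` strongly. This
is what survives for `q ≥ 0`, not necessarily a projection, of the strong continuity of the adjoint
on bounded parts of a finite von Neumann algebra. The copies are quantified over as a filter on
operators. -/
def NoVanishingCopies (M : VonNeumannAlgebra H) (q : H →L[ℂ] H) : Prop :=
  ∀ d, IsProjIn M d → ∀ F : Filter (H →L[ℂ] H), F.NeBot →
    (∀ᶠ v in F, v ∈ M ∧ star v * v = d ∧ q * v = v) →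
    (∀ η, Tendsto (fun v : H →L[ℂ] H => star v η) F (𝓝 0)) → d = 0

theorem IsQuasiTracial.exists_isPartialIsometry_eq_mul (hQ : IsQuasiTracial M a b ξ)
    (hq : q ∈ idealCone M b) (hx : x ∈ M) (hxq : x * q ≠ 0) :
    ∃ u ∈ M, IsPartialIsometry u ∧ u ≠ 0 ∧ u * a = u ∧ ∃ c, u = x * c := by
  obtain ⟨y, hy, hyb, hxy⟩ := exists_mul_ne_zero_of_mem_idealCone hq hxq
  obtain ⟨w, hw, hwa, hwb⟩ := hQ.equiv
  replace hwa : star w * w = a := hwa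
  replace hwb : w * star w = b := hwb
  have hne : x * y * w ≠ 0 := fun h => hxy <| by
    rw [← hyb, ← hwb, ← mul_assoc, ← mul_assoc, h, zero_mul]
  obtain ⟨u, huM, hu, hu0, ⟨c, -, huc⟩, hur⟩ :=
    exists_isPartialIsometry_ne_zero (mul_mem (mul_mem hx hy) hw) hne
  exact ⟨u, huM, hu, hu0,
    hur a (by rw [mul_assoc, mul_eq_self_of_star_mul_self hwa hQ.left.2.2]),
    y * w * c, by rw [huc]; simp only [mul_assoc]⟩

theorem IsQuasiTracial.noVanishingCopies (hQ : IsQuasiTracial M a b ξ)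
    (hq : q ∈ idealCone M b) : NoVanishingCopies M q := by
  intro d hd F hF hcopy hlim
  by_contra hd0
  obtain ⟨v₀, hv₀M, hv₀d, hqv₀⟩ := hcopy.exists
  obtain ⟨u, huM, hu, hu0, hua, c, huc⟩ := hQ.exists_isPartialIsometry_eq_mul hq
    (star_mem hv₀M) fun h => hd0 (by
      rw [← hv₀d]; nth_rewrite 2 [← hqv₀]; rw [← mul_assoc, h, zero_mul])
  have hdu : d * u = u := by
    rw [huc, ← mul_assoc,
      mul_star_of_mul_eq hd.2.1 (mul_eq_self_of_star_mul_self hv₀d hd.2.2)]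
  have hvu : ∀ v, star v * v = d → star (v * u) * (v * u) = star u * u := fun v hv => by
    rw [star_mul, mul_assoc, mul_mul_of_mul_eq hv, hdu]
  have hzero : Tendsto (fun v => q ((v * u) ξ)) F (𝓝 0) := by
    refine hQ.tendsto_apply_zero_of_mem_idealCone (C := 1) hq ?_ fun η => ?_
    · filter_upwards [hcopy] with v ⟨hvM, hvd, _⟩
      refine ⟨mul_mem hvM huM, ?_, by rw [mul_assoc, hua]⟩
      exact (isPartialIsometry_of_star_mul_self (hvu v hvd)
        hu.isStarProjection_star_mul_self.isIdempotentElem).norm_le_one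
    · simpa [Function.comp_def] using ((star u).continuous.tendsto _).comp (hlim η)
  have hconst : ∀ᶠ v in F, ‖q ((v * u) ξ)‖ = ‖u ξ‖ := by
    filter_upwards [hcopy] with v ⟨_, hvd, hqv⟩
    rw [← norm_apply_eq_of_star_mul_self_eq (hvu v hvd), ← mul_apply_eq_comp, ← mul_assoc, hqv]
  have huξ : u ξ = 0 := by
    simpa using tendsto_nhds_unique (tendsto_const_nhds.congr' (hconst.mono fun _ h => h.symm))
      hzero.norm
  refine hu0 ?_
  rw [← hu.mul_star_mul_self, hQ.eq_zero_of_apply_eq_zero _ (hu.isProjIn_star_mul_self huM)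
    (by rw [mul_assoc, hua]) (by simp [huξ]), mul_zero]

theorem tendsto_zero_of_norm_sq_eq_sub {E : Type*} [NormedAddCommGroup E] {f : ℕ → E} {g : ℕ → ℝ}
    (h : ∀ n, ‖f n‖ ^ 2 = g n - g (n + 1)) (hg : ∀ n, 0 ≤ g n) : Tendsto f atTop (𝓝 0) := by
  have hsum : Summable fun n => ‖f n‖ ^ 2 :=
    summable_of_sum_range_le (c := g 0) (fun n => sq_nonneg _) fun n => by
      simp_rw [h, Finset.sum_range_sub']
      exact sub_le_self _ (hg n)
  rw [tendsto_zero_iff_norm_tendsto_zero]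
  simpa using hsum.tendsto_atTop_zero.sqrt

theorem pow_mul_copy {R : Type*} [Monoid R] [StarMul R] {d q x : R} (hx : star x * x = q)
    (hqx : q * x = x) (hqd : q * d = d) (n : ℕ) :
    star (x ^ n * d) * (x ^ n * d) = star d * d ∧ q * (x ^ n * d) = x ^ n * d := by
  induction n with
  | zero => simp [hqd]
  | succ n ih =>
    rw [pow_succ', mul_assoc]
    exact ⟨by rw [star_mul, mul_assoc, mul_mul_of_mul_eq hx, ih.2, ih.1],
      by rw [← mul_assoc, hqx]⟩

theorem tendsto_star_pow_mul_sub_apply {s : H →L[ℂ] H} (hq : IsStarProjection q)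
    (hs : IsStarProjection s) (hsq : s * q = s) (hxq : x * q = x) (hxs : x * star x = s) (η : H) :
    Tendsto (fun n => star (x ^ n * (q - s)) η) atTop (𝓝 0) := by
  refine tendsto_zero_of_norm_sq_eq_sub (g := fun n => ‖q (star (x ^ n) η)‖ ^ 2) (fun n => ?_)
    fun n => sq_nonneg _
  set ζ := star (x ^ n) η with hζ
  have hqs : IsStarProjection (q - s) := hs.sub_of_mul_eq_left hq hsq
  have hnext : q (star (x ^ (n + 1)) η) = star x ζ := by
    rw [hζ, pow_succ, star_mul, ← mul_apply_eq_comp, ← mul_assoc,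
      mul_star_of_mul_eq hq.isSelfAdjoint hxq, mul_apply_eq_comp]
  have hsum : ‖s ζ‖ ^ 2 + ‖(q - s) ζ‖ ^ 2 = ‖q ζ‖ ^ 2 := norm_apply_sq_add (by
    rw [hs.isSelfAdjoint.star_eq, hqs.isSelfAdjoint.star_eq, hq.isSelfAdjoint.star_eq,
      hs.isIdempotentElem, hqs.isIdempotentElem, hq.isIdempotentElem, add_sub_cancel]) ζ
  rw [hnext, norm_apply_eq_of_star_mul_self (v := star x) (by rw [star_star, hxs]) hs, star_mul,
    hqs.isSelfAdjoint.star_eq, mul_apply_eq_comp, ← hζ]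
  exact eq_sub_of_add_eq' hsum

theorem NoVanishingCopies.finiteProj (h : NoVanishingCopies M q) (hq : IsProjIn M q) :
    FiniteProj M q := by
  rintro s hs ⟨hsq, hqs⟩ ⟨x, hxM, hxq, hxs⟩
  replace hxq : star x * x = q := hxq
  replace hxs : x * star x = s := hxs
  have hxq' : x * q = x := mul_eq_self_of_star_mul_self hxq hq.2.2
  have hqx : q * x = x := by
    have hsx : s * x = x := by rw [← hxs, mul_assoc, hxq, hxq']
    rw [← hsx, ← mul_assoc, hqs]
  have hd : IsProjIn M (q - s) := isProjIn_iff.2 ⟨sub_mem hq.1 hs.1,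
    hs.isStarProjection.sub_of_mul_eq_left hq.isStarProjection hsq⟩
  refine (sub_eq_zero.1 (h _ hd (map (fun n => x ^ n * (q - s)) atTop) inferInstance ?_
    fun η => tendsto_map'_iff.2 ?_)).symm
  · refine Filter.eventually_map.2 (.of_forall fun n => ⟨mul_mem (pow_mem hxM n) hd.1, ?_⟩)
    simpa only [hd.star_eq, hd.2.2] using
      pow_mul_copy hxq hqx (show q * (q - s) = q - s by rw [mul_sub, hq.2.2, hqs]) n
  · exact tendsto_star_pow_mul_sub_apply hq.isStarProjection hs.isStarProjection hsq hxq' hxs η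

end VanishingCopies

section OrthogonalFamily

variable {M : VonNeumannAlgebra H} {b p v w x z : H →L[ℂ] H} {S : Set (H →L[ℂ] H)}

/-- A family of partial isometries of `M` carrying `b` onto pairwise orthogonal subprojections
of `p`. -/
structure IsOrthogonalCopies (M : VonNeumannAlgebra H) (p b : H →L[ℂ] H)
    (S : Set (H →L[ℂ] H)) : Prop where
  copy : ∀ w ∈ S, w ∈ M ∧ star w * w = b ∧ p * w = w
  pairwise : S.Pairwise fun v w => star v * w = 0

theorem IsOrthogonalCopies.finite (hS : IsOrthogonalCopies M p b S) (hfin : FiniteProj M p)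
    (hp : IsProjIn M p) (hb : IsIdempotentElem b) (hb0 : b ≠ 0) : S.Finite := by
  by_contra hinf
  let w := Set.Infinite.natEmbedding S hinf
  have hcopy := fun n => hS.copy _ (w n).2
  refine hb0 (hfin.eq_zero_of_orthogonal_copies hp hb (fun n => (hcopy n).1)
    (fun n => (hcopy n).2.2) fun m n => ?_)
  split_ifs with hmn
  · rw [hmn, (hcopy n).2.1]
  · exact hS.pairwise (w m).2 (w n).2 fun h => hmn (w.injective (Subtype.ext h))

theorem exists_maximal_isOrthogonalCopies (M : VonNeumannAlgebra H) (p b : H →L[ℂ] H) :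
    ∃ S, Maximal (IsOrthogonalCopies M p b) S := by
  refine zorn_subset {S | IsOrthogonalCopies M p b S} fun c hc hchain =>
    ⟨⋃₀ c, ⟨?_, ?_⟩, fun _ => Set.subset_sUnion_of_mem⟩
  · rintro w ⟨S, hS, hw⟩
    exact (hc hS).copy w hw
  · exact (Set.pairwise_sUnion hchain.directedOn).2 fun S hS => (hc hS).pairwise

theorem IsOrthogonalCopies.insert (hS : IsOrthogonalCopies M p b S) (hwM : w ∈ M)
    (hwb : star w * w = b) (hpw : p * w = w) (h : ∀ v ∈ S, star v * w = 0) :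
    IsOrthogonalCopies M p b (insert w S) := by
  refine ⟨?_, Set.pairwise_insert.2 ⟨hS.pairwise, fun v hv _ => ⟨?_, h v hv⟩⟩⟩
  · rintro v (rfl | hv)
    exacts [⟨hwM, hwb, hpw⟩, hS.copy v hv]
  · simpa using congr(star $(h v hv))

variable {F : Finset (H →L[ℂ] H)}

theorem IsOrthogonalCopies.sum_mul (hF : IsOrthogonalCopies M p b F) (hb : IsIdempotentElem b)
    (hw : w ∈ F) : (∑ v ∈ F, v * star v) * w = w := by
  rw [Finset.sum_mul, Finset.sum_eq_single_of_mem w hw fun v hv hvw => by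
    rw [mul_assoc, hF.pairwise hv hw hvw, mul_zero], mul_assoc, (hF.copy w hw).2.1,
    mul_eq_self_of_star_mul_self (hF.copy w hw).2.1 hb]

theorem IsOrthogonalCopies.isProjIn_sum (hF : IsOrthogonalCopies M p b F)
    (hb : IsIdempotentElem b) : IsProjIn M (∑ v ∈ F, v * star v) := by
  refine ⟨sum_mem fun v hv => mul_mem (hF.copy v hv).1 (star_mem (hF.copy v hv).1),
    isSelfAdjoint_sum F fun v _ => .mul_star_self v, ?_⟩
  rw [Finset.mul_sum]
  exact Finset.sum_congr rfl fun v hv => by rw [← mul_assoc, hF.sum_mul hb hv]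

theorem IsOrthogonalCopies.sum_mem_idealCone (hF : IsOrthogonalCopies M p b F)
    (hb : IsIdempotentElem b) : ∑ v ∈ F, v * star v ∈ idealCone M b :=
  sum_mem fun v hv => mul_star_self_mem_idealCone (hF.copy v hv).1
    (mul_eq_self_of_star_mul_self (hF.copy v hv).2.1 hb)

theorem IsOrthogonalCopies.mul_sum_eq (hF : IsOrthogonalCopies M p b F) :
    p * ∑ v ∈ F, v * star v = ∑ v ∈ F, v * star v := by
  rw [Finset.mul_sum]
  exact Finset.sum_congr rfl fun v hv => by rw [← mul_assoc, (hF.copy v hv).2.2]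

theorem mul_mem_idealCone_of_isCentralProj (hz : IsCentralProj M z) (hx : x ∈ M)
    (h : x ∈ idealCone M b) : z * x ∈ idealCone M b := by
  have hconj := conjugate_mem_idealCone hz.1.1 h
  rwa [hz.1.star_eq, mul_assoc, ← hz.2 x hx, ← mul_assoc, hz.1.2.2] at hconj

/- Fill `p` with a maximal, hence finite, family of orthogonal copies of `b`; by comparison, what
remains is, on a central summand not annihilating `b`, equivalent to a subprojection of `b`. -/
theorem FiniteProj.exists_mul_mem_idealCone (hfin : FiniteProj M p) (hp : IsProjIn M p)
    (hb : IsProjIn M b) (hb0 : b ≠ 0) :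
    ∃ z, IsCentralProj M z ∧ z * b ≠ 0 ∧ z * p ∈ idealCone M b := by
  obtain ⟨S, hS, hmax⟩ := exists_maximal_isOrthogonalCopies M p b
  lift S to Finset (H →L[ℂ] H) using hS.finite hfin hp hb.2.2 hb0 with F
  set E := ∑ v ∈ F, v * star v
  have hEproj : IsProjIn M E := hS.isProjIn_sum hb.2.2
  have hpE : p * E = E := hS.mul_sum_eq
  have hrest : IsProjIn M (p - E) := isProjIn_iff.2 ⟨sub_mem hp.1 hEproj.1,
    hEproj.isStarProjection.sub_of_mul_eq_right hp.isStarProjection hpE⟩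
  obtain ⟨v, hvM, hv, hvb, hpv, z, hz, hzb, hzp⟩ := exists_comparison hb hrest
  refine ⟨z, hz, fun hzb0 => hb0 ?_, ?_⟩
  · have hvv : star v * v = b := by
      have hzvv : z * (star v * v) = 0 := by
        rw [← mul_star_of_mul_eq hb.2.1 hvb, mul_assoc, ← mul_assoc, hzb0, zero_mul]
      rw [mul_sub, hzb0, hzvv, sub_zero] at hzb
      exact (sub_eq_zero.1 hzb.symm).symm
    have hEp : E * p = E := by simpa [hEproj.star_eq] using star_mul_of_mul_eq hp.2.1 hpE
    have hEv : E * v = 0 := by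
      rw [← hpv, ← mul_assoc, mul_sub, hEp, hEproj.2.2, sub_self, zero_mul]
    have hpv' : p * v = v := by rwa [sub_mul, hEv, sub_zero] at hpv
    have hvF : v ∈ F := by
      refine hmax (hS.insert hvM hvv hpv' fun w hw => ?_) (Set.subset_insert v _)
        (Set.mem_insert v _)
      rw [← star_mul_of_mul_eq hEproj.2.1 (hS.sum_mul hb.2.2 hw), mul_assoc, hEv, mul_zero]
    rw [← hvv, (hS.sum_mul hb.2.2 hvF).symm.trans hEv, mul_zero]
  · have hzpE : z * p = z * E + z * (v * star v) := by
      rw [← mul_add, ← sub_eq_zero, ← mul_sub, ← sub_sub, hzp]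
    rw [hzpE]
    exact add_mem (mul_mem_idealCone_of_isCentralProj hz hEproj.1 (hS.sum_mem_idealCone hb.2.2))
      (mul_mem_idealCone_of_isCentralProj hz (hv.isProjIn_mul_star_self hvM).1
        (mul_star_self_mem_idealCone hvM hvb))

end OrthogonalFamily

section LimitsOfCopies

variable {M : VonNeumannAlgebra H} {d e g p q r t u x y : H →L[ℂ] H}

theorem IsApproxPolarPart.norm_sub_apply_sq_le (hu : IsApproxPolarPart M (1 / 2) t u)
    (htq : t * q = t) (ht : ‖t‖ ≤ 1) (η : H) :
    ‖(q - star u * u) η‖ ^ 2 ≤ 2 * (‖q η‖ ^ 2 - ‖t η‖ ^ 2) := by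
  have hs := hu.isPartialIsometry.isStarProjection_star_mul_self
  have hsq : star u * u * q = star u * u := by rw [mul_assoc, hu.mul_eq_self q htq]
  have hpyth : ‖q η - (star u * u) (q η)‖ ^ 2 = ‖q η‖ ^ 2 - ‖(star u * u) (q η)‖ ^ 2 :=
    norm_apply_sq_sub_of_isStarProjection hs _
  have hsη : (star u * u) (q η) = (star u * u) η := congr($hsq η)
  have htη : t (q η) = t η := congr($htq η)
  have hpolar := hu.norm_apply_sq_le (q η)
  have hcontr : ‖t ((star u * u) η)‖ ^ 2 ≤ ‖(star u * u) η‖ ^ 2 := by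
    gcongr
    exact t.le_of_opNorm_le ht _ |>.trans_eq (one_mul _)
  rw [hsη] at hpyth hpolar
  rw [htη] at hpolar
  rw [sub_apply]
  linarith

theorem FiniteProj.exists_copy_norm_sq_le (hfin : FiniteProj M q) (hq : IsProjIn M q) (ht : t ∈ M)
    (ht1 : ‖t‖ ≤ 1) (hqt : q * t = t) (htq : t * q = t) (hg : IsProjIn M g) (hgq : g * q = g)
    (hgt : g * t = 0) :
    ∃ v ∈ M, star v * v = g ∧ q * v = v ∧ ∀ η, ‖star v η‖ ^ 2 ≤ 2 * (‖q η‖ ^ 2 - ‖t η‖ ^ 2) := by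
  obtain ⟨u, hu⟩ := exists_isApproxPolarPart ht one_half_pos
  obtain ⟨c, -, hur⟩ := hu.exists_eq_mul
  have huq : u * q = u := hu.mul_eq_self q htq
  have hqu : q * u = u := by rw [hur, ← mul_assoc, hqt]
  have hgu : g * u = 0 := by rw [hur, ← mul_assoc, hgt, zero_mul]
  obtain ⟨w, hw, hww, hww'⟩ := hfin.exists_complement_equiv hq hu.mem hu.isPartialIsometry huq hqu
  have hsub : IsStarProjection (q - star u * u) :=
    hu.isPartialIsometry.isStarProjection_sub_star_mul_self hq.isStarProjection huq
  have hwq : w * q = w := by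
    rw [← mul_eq_self_of_star_mul_self hww hsub.isIdempotentElem, mul_assoc, sub_mul, hq.2.2,
      mul_assoc, huq]
  refine ⟨star w * g, mul_mem (star_mem hw) hg.1, ?_, ?_, fun η => ?_⟩
  · rw [star_mul, star_star, hg.star_eq, mul_assoc, ← mul_assoc w, hww', sub_mul, mul_sub,
      ← mul_assoc, ← mul_assoc g (u * star u), ← mul_assoc g u, hgu, hgq, hg.2.2]
    simp
  · rw [← mul_assoc, mul_star_of_mul_eq hq.2.1 hwq]
  · refine le_trans ?_ (hu.norm_sub_apply_sq_le htq ht1 η)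
    rw [← norm_apply_eq_of_star_mul_self hww hsub, star_mul, star_star, hg.star_eq]
    gcongr
    exact norm_apply_le_of_isStarProjection hg.isStarProjection _

variable {ι : Type*} {l : Filter ι} [NeBot l] {T Q X : ι → H →L[ℂ] H}

theorem NoVanishingCopies.eq_zero_of_mul_eq_zero (hN : NoVanishingCopies M q) (hq : IsProjIn M q)
    (hT : ∀ i, T i ∈ M ∧ ‖T i‖ ≤ 1 ∧ q * T i = T i ∧ T i * q = T i) (hg : IsProjIn M g)
    (hgq : g * q = g) (hgT : ∀ i, g * T i = 0)
    (hlim : ∀ η, Tendsto (fun i => ‖T i η‖) l (𝓝 ‖q η‖)) : g = 0 := by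
  choose V hV hVg hqV hbound using fun i => (hN.finiteProj hq).exists_copy_norm_sq_le hq
    (hT i).1 (hT i).2.1 (hT i).2.2.1 (hT i).2.2.2 hg hgq (hgT i)
  refine hN g hg (map V l) inferInstance
    (eventually_map.2 (.of_forall fun i => ⟨hV i, hVg i, hqV i⟩)) fun η => tendsto_map'_iff.2 ?_
  have hzero : Tendsto (fun i => 2 * (‖q η‖ ^ 2 - ‖T i η‖ ^ 2)) l (𝓝 0) := by
    have h := (((hlim η).pow 2).const_sub (‖q η‖ ^ 2)).const_mul 2
    rwa [sub_self, mul_zero] at h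
  rw [tendsto_zero_iff_norm_tendsto_zero]
  simpa using (squeeze_zero (fun i => sq_nonneg _) (fun i => hbound i η) hzero).sqrt

theorem FiniteProj.exists_noVanishingCopies (hfin : FiniteProj M p) (hp : IsProjIn M p)
    (huM : u ∈ M) (hu : IsPartialIsometry u) (hu0 : u ≠ 0) (hpu : p * u = u) :
    ∃ c, IsCentralProj M c ∧ ∃ y ∈ M, IsPartialIsometry y ∧ y ≠ 0 ∧ y * (star u * u) = y ∧
      c * y = y ∧ ∀ x ∈ M, c * x = x → p * x = x →
        NoVanishingCopies M (star x * x + star y * y) := by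
  have huu := hu.isProjIn_mul_star_self huM
  obtain ⟨a, b, ξ, hQ, hb0, hub⟩ := exists_isQuasiTracial huu
    (hfin.mono hp huu ⟨by rw [mul_assoc, star_mul_of_mul_eq hp.2.1 hpu], by rw [← mul_assoc, hpu]⟩)
    fun h => hu0 (by rw [← hu, h, zero_mul])
  have hb := hQ.right
  obtain ⟨c, hc, hcb0, hcp⟩ := hfin.exists_mul_mem_idealCone hp hb hb0
  have hcb : IsProjIn M (c * b) := isProjIn_iff.2
    ⟨mul_mem hc.1.1 hb.1, hc.1.isStarProjection.mul hb.isStarProjection (hc.2 b hb.1)⟩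
  have hyy : c * b * u * star (c * b * u) = c * b := by
    rw [star_mul, hcb.star_eq, mul_assoc, ← mul_assoc u, hc.2 b hb.1, ← mul_assoc (u * star u),
      hub, ← hc.2 b hb.1, hcb.2.2]
  have hyM : c * b * u ∈ M := mul_mem hcb.1 huM
  have hby : b * (c * b * u) = c * b * u := by
    rw [← mul_assoc, hc.2 b hb.1, ← mul_assoc, hb.2.2]
  refine ⟨c, hc, c * b * u, hyM, ?_, ?_, ?_, ?_, fun x hx hcx hpx => ?_⟩
  · simpa using (isPartialIsometry_of_star_mul_self (v := star (c * b * u))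
      (by rw [star_star, hyy]) hcb.2.2).star
  · intro h
    rw [← hyy, h, zero_mul] at hcb0
    exact hcb0 rfl
  · rw [mul_assoc, ← mul_assoc u, hu]
  · rw [← mul_assoc, ← mul_assoc, hc.1.2.2]
  · refine hQ.noVanishingCopies (add_mem ?_ ?_)
    · simpa [mul_assoc, hpx, hcx] using conjugate_mem_idealCone (star_mem hx) hcp
    · simpa using mul_star_self_mem_idealCone (star_mem hyM) (star_mul_of_mul_eq hb.2.1 hby)

theorem exists_isPartialIsometry_ne_zero_of_tendsto (hX : ∀ i, X i ∈ M ∧ p * X i = X i)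
    (hXQ : ∀ i, star (X i) * X i = Q i) (hlim : ∀ η, Tendsto (fun i => Q i η) l (𝓝 (q η)))
    (he : IsProjIn M e) (heq : e * q = e) (he0 : e ≠ 0) :
    ∃ u ∈ M, IsPartialIsometry u ∧ u ≠ 0 ∧ u * e = u ∧ p * u = u := by
  obtain ⟨i, hi⟩ : ∃ i, X i * e ≠ 0 := by
    by_contra! h
    have hQe : ∀ i, e * Q i * 1 = 0 := fun i => by
      rw [← hXQ, mul_one, ← mul_assoc, ← he.star_eq, ← star_mul, h, star_zero, zero_mul]
    refine he0 ?_
    rw [← heq, ← mul_one (e * q)]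
    exact mul_mul_eq_of_tendsto_apply hlim (v' := fun _ => 0) (fun _ => by simp) (.of_forall hQe)
  obtain ⟨u, hu, hui, hu0, ⟨c, -, huc⟩, hur⟩ :=
    exists_isPartialIsometry_ne_zero (mul_mem (hX i).1 he.1) hi
  exact ⟨u, hu, hui, hu0, hur e (by rw [mul_assoc, he.2.2]),
    by rw [huc, ← mul_assoc, ← mul_assoc, (hX i).2]⟩

theorem IsPartialIsometry.mul_add_star_mul_self (hx : IsPartialIsometry x)
    (hxy : x * Star.star y = 0) : x * (Star.star x * x + Star.star y * y) = x := by
  rw [mul_add, ← mul_assoc, ← mul_assoc, hx, hxy, zero_mul, add_zero]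

theorem star_mul_self_star_mul_mul (hd : IsCentralProj M d) (hx : x * star x = d * p) (ht : t ∈ M)
    (hpt : p * t = t) (hg : IsStarProjection g) (htg : star t * t = g) (hdr : d * r = r) :
    star (star x * t * r) * (star x * t * r) = star (g * r) * (g * r) := by
  have hxt : x * (star x * t * r) = t * r := by
    rw [← mul_assoc, ← mul_assoc, hx, mul_assoc d, hpt, hd.2 t ht, mul_assoc, hdr]
  rw [star_mul, star_mul, star_star, mul_assoc, mul_assoc, hxt, ← mul_assoc (star t), htg, star_mul,
    hg.isSelfAdjoint.star_eq, mul_assoc, ← mul_assoc g, hg.isIdempotentElem]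

theorem NoVanishingCopies.eq_zero_of_tendsto (hN : NoVanishingCopies M (star x * x + star y * y))
    (hX : ∀ i, X i ∈ M ∧ p * X i = X i) (hXQ : ∀ i, star (X i) * X i = Q i)
    (hQ : ∀ i, IsStarProjection (Q i)) (hlim : ∀ η, Tendsto (fun i => Q i η) l (𝓝 (q η)))
    (hq : IsSelfAdjoint q) (hd : IsCentralProj M d) (hx : x ∈ M) (hxi : IsPartialIsometry x)
    (hxq : x * q = x) (hdx : d * x = x) (hxx : x * star x = d * p) (hy : y ∈ M)
    (hyi : IsPartialIsometry y) (hyq : y * q = y) (hdy : d * y = y) (hxy : x * star y = 0) :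
    y = 0 := by
  have hyx : y * star x = 0 := by simpa using congr(star $hxy)
  have hxp := hxi.isProjIn_star_mul_self hx
  have hyp := hyi.isProjIn_star_mul_self hy
  have hr : IsProjIn M (star x * x + star y * y) := isProjIn_iff.2 ⟨add_mem hxp.1 hyp.1,
    hxp.isStarProjection.add hyp.isStarProjection (by
      rw [mul_assoc, ← mul_assoc x, hxy, zero_mul, mul_zero])⟩
  have hxr := hxi.mul_add_star_mul_self hxy
  have hyr : y * (star x * x + star y * y) = y := by
    rw [add_comm, hyi.mul_add_star_mul_self hyx]
  set r := star x * x + star y * y with hr_def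
  have hqr : q * r = r := by
    rw [hr_def, mul_add, ← mul_assoc, ← mul_assoc, mul_star_of_mul_eq hq hxq,
      mul_star_of_mul_eq hq hyq]
  have hdr : d * r = r := by
    rw [hd.2 r hr.1, hr_def, add_mul, mul_assoc, mul_assoc, ← hd.2 x hx, ← hd.2 y hy, hdx, hdy]
  have hnorm : ∀ i η, ‖(star x * X i * r) η‖ = ‖Q i (r η)‖ := fun i =>
    norm_apply_eq_of_star_mul_self_eq
      (star_mul_self_star_mul_mul hd hxx (hX i).1 (hX i).2 (hQ i) (hXQ i) hdr)
  have hyy : star y * y = 0 := by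
    refine hN.eq_zero_of_mul_eq_zero (l := l) hr (T := fun i => star x * X i * r)
      (fun i => ⟨mul_mem (mul_mem (star_mem hx) (hX i).1) hr.1, ?_, ?_, ?_⟩) hyp ?_ (fun i => ?_)
      fun η => ?_
    · refine opNorm_le_bound _ zero_le_one fun η => ?_
      rw [hnorm, one_mul]
      exact (norm_apply_le_of_isStarProjection (hQ i) _).trans
        (norm_apply_le_of_isStarProjection hr.isStarProjection η)
    · rw [← mul_assoc, ← mul_assoc, mul_star_of_mul_eq hr.2.1 hxr]
    · rw [mul_assoc, hr.2.2]
    · rw [mul_assoc, hyr]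
    · rw [mul_assoc, ← mul_assoc y, ← mul_assoc y, hyx, zero_mul, zero_mul, mul_zero]
    · simpa only [hnorm, ← mul_apply_eq_comp, hqr] using (hlim (r η)).norm
  rw [← hyi, mul_assoc, hyy, mul_zero]

theorem FiniteProj.exists_copy_of_tendsto (hfin : FiniteProj M p) (hp : IsProjIn M p)
    (hq : IsProjIn M q) (hX : ∀ i, X i ∈ M ∧ p * X i = X i)
    (hXQ : ∀ i, star (X i) * X i = Q i) (hQ : ∀ i, IsStarProjection (Q i))
    (hlim : ∀ η, Tendsto (fun i => Q i η) l (𝓝 (q η))) :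
    ∃ v ∈ M, star v * v = q ∧ p * v = v := by
  obtain ⟨v, hvM, hv, hvq, hpv, z, hz, hze, hzp⟩ := exists_comparison hq hp
  refine ⟨v, hvM, ?_, hpv⟩
  set e := q - star v * v with he_def
  by_contra hne
  have he : IsProjIn M e := hv.isProjIn_sub_star_mul_self hvM hq hvq
  have hve : v * e = 0 := hv.mul_sub_star_mul_self hvq
  have heq : e * q = e := by rw [he_def, sub_mul, mul_assoc, hvq, hq.2.2]
  obtain ⟨u, huM, hu, hu0, hue, hpu⟩ := exists_isPartialIsometry_ne_zero_of_tendsto hX hXQ hlim he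
    heq (sub_ne_zero.2 (Ne.symm hne))
  obtain ⟨c, hc, y, hyM, hy, hy0, hyu, hcy, hN⟩ := hfin.exists_noVanishingCopies hp huM hu hu0 hpu
  have hye : y * e = y := by rw [← hyu, mul_assoc, mul_assoc, hue]
  have hd : IsCentralProj M (c * z) := hc.mul hz
  have hzy : z * y = y := by
    rw [hz.2 y hyM]
    nth_rw 1 [← hye]
    rw [mul_assoc, ← hz.2 e he.1, hze, hye]
  have hdx : c * z * (c * z * v) = c * z * v := by rw [← mul_assoc, hd.1.2.2]
  have hxx : c * z * v * star (c * z * v) = c * z * p := by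
    have hzvv : z * (v * star v) = z * p := by
      rwa [mul_sub, sub_eq_zero, eq_comm] at hzp
    rw [star_mul, hd.1.star_eq, mul_assoc, ← mul_assoc v, ← hd.2 _ (mul_mem hvM (star_mem hvM)),
      ← mul_assoc, hd.1.2.2, mul_assoc, mul_assoc, hzvv]
  have hxM : c * z * v ∈ M := mul_mem hd.1.1 hvM
  have hpx : p * (c * z * v) = c * z * v := by
    rw [← mul_assoc, ← hd.2 p hp.1, mul_assoc, hpv]
  have hcx : c * (c * z * v) = c * z * v := by rw [← mul_assoc, ← mul_assoc, hc.1.2.2]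
  have hxi : IsPartialIsometry (c * z * v) := by
    rw [IsPartialIsometry, hxx, mul_assoc, hpx, hdx]
  have hvy : v * star y = 0 := by
    rw [← mul_star_of_mul_eq he.2.1 hye, ← mul_assoc, hve, zero_mul]
  exact hy0 <| (hN _ hxM hcx hpx).eq_zero_of_tendsto hX hXQ hQ hlim hq.2.1 hd hxM hxi
    (by rw [mul_assoc, hvq]) hdx hxx hyM hy (by rw [← hye, mul_assoc, heq])
    (by rw [mul_assoc, hzy, hcy]) (by rw [mul_assoc, hvy, mul_zero])

end LimitsOfCopies

section Quotient

variable {M : VonNeumannAlgebra H} {p q r : H →L[ℂ] H}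

theorem subEquiv_iff (hp : IsProjIn M p) (hq : IsProjIn M q) :
    SubEquiv M q p ↔ ∃ v ∈ M, star v * v = q ∧ p * v = v := by
  constructor
  · rintro ⟨r, -, ⟨v, hv, hvq, hvr⟩, -, hpr⟩
    replace hvq : star v * v = q := hvq
    replace hvr : v * star v = r := hvr
    refine ⟨v, hv, hvq, ?_⟩
    rw [← mul_eq_self_of_star_mul_self hvq hq.2.2, ← hvq, ← mul_assoc v, hvr, ← mul_assoc, hpr]
  · rintro ⟨v, hv, hvq, hpv⟩
    have hvi := isPartialIsometry_of_star_mul_self hvq hq.2.2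
    exact ⟨v * star v, hvi.isProjIn_mul_star_self hv, ⟨v, hv, hvq, rfl⟩,
      by rw [mul_assoc, star_mul_of_mul_eq hp.2.1 hpv], by rw [← mul_assoc, hpv]⟩

theorem subEquiv_refl (hp : IsProjIn M p) : SubEquiv M p p :=
  (subEquiv_iff hp hp).2 ⟨p, hp.1, by rw [hp.star_eq, hp.2.2], hp.2.2⟩

theorem MvNEquiv.subEquiv_congr (h : MvNEquiv M q r) (hp : IsProjIn M p) (hq : IsProjIn M q)
    (hr : IsProjIn M r) : SubEquiv M q p ↔ SubEquiv M r p := by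
  obtain ⟨x, hx, hxq, hxr⟩ := h
  replace hxq : star x * x = q := hxq
  replace hxr : x * star x = r := hxr
  have hx' := mul_eq_self_of_star_mul_self hxq hq.2.2
  rw [subEquiv_iff hp hq, subEquiv_iff hp hr]
  constructor
  · rintro ⟨v, hv, hvq, hpv⟩
    refine ⟨v * star x, mul_mem hv (star_mem hx), ?_, by rw [← mul_assoc, hpv]⟩
    rw [star_mul, star_star, mul_assoc, ← mul_assoc (star v), hvq, ← mul_assoc, hx', hxr]
  · rintro ⟨v, hv, hvr, hpv⟩
    refine ⟨v * x, mul_mem hv hx, ?_, by rw [← mul_assoc, hpv]⟩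
    rw [star_mul, mul_assoc, ← mul_assoc (star v), hvr, ← hxr, mul_assoc x, hxq, hx', hxq]

theorem pquotMk_preimage_image_subEquiv (hp : IsProjIn M p) :
    pquotMk M ⁻¹' (pquotMk M '' {q : ProjSet M | SubEquiv M q.1 p}) =
      {q : ProjSet M | SubEquiv M q.1 p} := by
  let P : PQuot M → Prop := Quot.lift (fun q : ProjSet M => SubEquiv M q.1 p)
    fun q r h => propext (h.subEquiv_congr hp q.2 r.2)
  refine Set.Subset.antisymm ?_ (Set.subset_preimage_image _ _)
  rintro q ⟨r, hr, hrq⟩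
  exact (congrArg P hrq).mp hr

theorem tendsto_projSet_iff {ι : Type*} {l : Filter ι} {Q : ι → ProjSet M} {q : ProjSet M} :
    Tendsto Q l (𝓝 q) ↔ ∀ η, Tendsto (fun i => (Q i).1 η) l (𝓝 (q.1 η)) := by
  rw [nhds_induced, tendsto_comap_iff, tendsto_pi_nhds]
  rfl

theorem FiniteProj.isClosed_setOf_subEquiv (hfin : FiniteProj M p) (hp : IsProjIn M p) :
    IsClosed {q : ProjSet M | SubEquiv M q.1 p} := by
  rw [← closure_subset_iff_isClosed]
  intro q hq
  rw [mem_closure_iff_comap_neBot] at hq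
  choose X hXM hXQ hpX using fun i : {q : ProjSet M | SubEquiv M q.1 p} =>
    (subEquiv_iff hp i.1.2).1 i.2
  exact (subEquiv_iff hp q.2).2 (hfin.exists_copy_of_tendsto hp q.2 (fun i => ⟨hXM i, hpX i⟩) hXQ
    (fun i => i.1.2.isStarProjection) (tendsto_projSet_iff.1 tendsto_comap))

theorem ProperlyInfiniteProj.exists_isometries (hM : ProperlyInfiniteProj M (1 : H →L[ℂ] H)) :
    ∃ J : ℕ → H →L[ℂ] H, (∀ n, J n ∈ M) ∧ (∀ m n, star (J m) * J n = if m = n then 1 else 0) ∧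
      ∀ η, Tendsto (fun n => star (J n) η) atTop (𝓝 0) := by
  obtain ⟨-, e, he, hpair, hequiv, hsum⟩ := hM
  choose v hv hve hv1 using hequiv
  replace hve : ∀ n, star (v n) * v n = e n := hve
  replace hv1 : ∀ n, v n * star (v n) = 1 := hv1
  have hvv : ∀ n, v n * e n = v n := fun n => mul_eq_self_of_star_mul_self (hve n) (he n).2.2
  refine ⟨fun n => star (v n), fun n => star_mem (hv n), fun m n => ?_, fun η => ?_⟩
  · rw [star_star]
    split_ifs with hmn
    · rw [hmn, hv1]
    · beta_reduce
      rw [← hvv m, ← mul_star_of_mul_eq (he n).2.1 (hvv n), mul_assoc, ← mul_assoc (e m),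
        hpair hmn, zero_mul, mul_zero]
  · rw [tendsto_zero_iff_norm_tendsto_zero]
    simpa only [star_star, norm_apply_eq_of_star_mul_self (hve _) (he _).isStarProjection,
      norm_zero] using (hsum η).summable.tendsto_atTop_zero.norm

theorem star_mul_self_of_isometry {j s : H →L[ℂ] H} (hj : star j * j = 1)
    (hs : IsStarProjection s) : star (j * s) * (j * s) = s := by
  rw [star_mul, mul_assoc, mul_mul_of_mul_eq hj, one_mul, hs.isSelfAdjoint.star_eq,
    hs.isIdempotentElem]

theorem tendsto_mul_star_self_apply_zero {J : ℕ → H →L[ℂ] H} {s : H →L[ℂ] H}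
    (hJ : ∀ n, star (J n) * J n = 1) (hJ0 : ∀ η, Tendsto (fun n => star (J n) η) atTop (𝓝 0))
    (hs : IsStarProjection s) (η : H) :
    Tendsto (fun n => (J n * s * star (J n * s)) η) atTop (𝓝 0) := by
  refine squeeze_zero_norm (fun n => ?_) (by simpa using (hJ0 η).norm)
  have hJs := isPartialIsometry_of_star_mul_self (star_mul_self_of_isometry (hJ n) hs)
    hs.isIdempotentElem
  refine (hJs.norm_apply_le _).trans ?_
  rw [star_mul, hs.isSelfAdjoint.star_eq]
  exact norm_apply_le_of_isStarProjection hs _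

theorem pquotMk_eq_of_copy {v : H →L[ℂ] H} (hp : IsProjIn M p) (hv : v ∈ M)
    (hvp : star v * v = p) :
    pquotMk M ⟨p, hp⟩ = pquotMk M ⟨v * star v,
      (isPartialIsometry_of_star_mul_self hvp hp.2.2).isProjIn_mul_star_self hv⟩ :=
  Quot.sound ⟨v, hv, hvp, rfl⟩

/- Keep one copy of `r` fixed and move copies of `p - r` off to infinity. -/
theorem ProperlyInfiniteProj.exists_copies_tendsto (hM : ProperlyInfiniteProj M (1 : H →L[ℂ] H))
    (hp : IsProjIn M p) (hr : IsProjIn M r) (hrp : ProjLE r p) :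
    ∃ v ∈ M, star v * v = r ∧ ∃ w : ℕ → H →L[ℂ] H, (∀ n, w n ∈ M ∧ star (w n) * w n = p) ∧
      ∀ η, Tendsto (fun n => (w n * star (w n)) η) atTop (𝓝 ((v * star v) η)) := by
  obtain ⟨J, hJM, hJ, hJ0⟩ := hM.exists_isometries
  have hJ1 : ∀ n, star (J n) * J n = 1 := fun n => by rw [hJ, if_pos rfl]
  have hs : IsProjIn M (p - r) := isProjIn_iff.2 ⟨sub_mem hp.1 hr.1,
    hr.isStarProjection.sub_of_mul_eq_left hp.isStarProjection hrp.1⟩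
  have hrs : r * (p - r) = 0 := by rw [mul_sub, hrp.1, hr.2.2, sub_self]
  have horth : ∀ n, star (J 0 * r) * (J (n + 1) * (p - r)) = 0 := fun n => by
    rw [star_mul, mul_assoc, ← mul_assoc (star (J 0)), hJ, if_neg n.succ_ne_zero.symm, zero_mul,
      mul_zero]
  have horth' : ∀ n, J 0 * r * star (J (n + 1) * (p - r)) = 0 := fun n => by
    rw [star_mul, hs.star_eq, mul_assoc, ← mul_assoc r, hrs, zero_mul, mul_zero]
  refine ⟨J 0 * r, mul_mem (hJM 0) hr.1, star_mul_self_of_isometry (hJ1 0) hr.isStarProjection,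
    fun n => J 0 * r + J (n + 1) * (p - r), fun n => ⟨?_, ?_⟩, fun η => ?_⟩
  · exact add_mem (mul_mem (hJM 0) hr.1) (mul_mem (hJM _) hs.1)
  · rw [star_add_mul_add_of_orthogonal (horth n),
      star_mul_self_of_isometry (hJ1 0) hr.isStarProjection,
      star_mul_self_of_isometry (hJ1 _) hs.isStarProjection, add_sub_cancel]
  · simp only [add_mul_star_add_of_orthogonal (horth' _), add_apply]
    simpa using (tendsto_mul_star_self_apply_zero (fun n => hJ1 (n + 1))
      (fun η => (hJ0 η).comp (tendsto_add_atTop_nat 1)) hs.isStarProjection η).const_add _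

theorem ProperlyInfiniteProj.pquotMk_mem_closure (hM : ProperlyInfiniteProj M (1 : H →L[ℂ] H))
    (hp : IsProjIn M p) (hr : IsProjIn M r) (hrp : ProjLE r p) :
    pquotMk M ⟨r, hr⟩ ∈ closure {x : PQuot M | x = pquotMk M ⟨p, hp⟩} := by
  obtain ⟨v, hv, hvr, w, hw, hlim⟩ := hM.exists_copies_tendsto hp hr hrp
  rw [pquotMk_eq_of_copy hr hv hvr]
  let Q : ℕ → ProjSet M := fun n => ⟨w n * star (w n),
    (isPartialIsometry_of_star_mul_self (hw n).2 hp.2.2).isProjIn_mul_star_self (hw n).1⟩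
  have hv' : IsProjIn M (v * star v) :=
    (isPartialIsometry_of_star_mul_self hvr hr.2.2).isProjIn_mul_star_self hv
  have hQ : Tendsto Q atTop (𝓝 ⟨v * star v, hv'⟩) := tendsto_projSet_iff.2 hlim
  exact mem_closure_of_tendsto ((continuous_quot_mk.tendsto _).comp hQ)
    (.of_forall fun n => (pquotMk_eq_of_copy hp (hw n).1 (hw n).2).symm)

end Quotient

/-- Let `M` be properly infinite and `p` a finite projection in `M`.
Then the closure of `{[p]}` in the quotient operator topology on `P(M)/∼` is
`{[q] : q ≼ p}`. -/
theorem closure_singleton_finite (M : VonNeumannAlgebra H)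
    (hM : ProperlyInfiniteProj M (1 : H →L[ℂ] H))
    (p : H →L[ℂ] H) (hp : IsProjIn M p) (hfin : FiniteProj M p) :
    closure {x : PQuot M | x = pquotMk M ⟨p, hp⟩} =
      pquotMk M '' {q : ProjSet M | SubEquiv M q.1 p} := by
  apply Set.Subset.antisymm
  · refine closure_minimal ?_ ?_
    · rintro _ rfl
      exact ⟨⟨p, hp⟩, subEquiv_refl hp, rfl⟩
    · have hquot : IsQuotientMap (pquotMk M) := isQuotientMap_quot_mk
      rw [← hquot.isClosed_preimage, pquotMk_preimage_image_subEquiv hp]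
      exact hfin.isClosed_setOf_subEquiv hp
  · rintro _ ⟨⟨q, hq⟩, ⟨r, hr, hqr, hrp⟩, rfl⟩
    have hqr' : pquotMk M ⟨q, hq⟩ = pquotMk M ⟨r, hr⟩ := Quot.sound hqr
    rw [hqr']
    exact hM.pquotMk_mem_closure hp hr hrp
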